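/- arXiv:math/0701066 — 5 statements merged into one kernel-verified Lean document; each statement's English description precedes it below -/
import Mathlib

section
/- For nonnegative integers $a, b, k$ and $n \ge 1$, the constant term of $H(x_0,\ldots,x_n;a,b,k) := \prod_{l=1}^n (1-x_l/x_0)^a (1-x_0/x_l)^b \prod_{1\le i\ne j\le n}(1-x_i/x_j)^k$ equals $M_n(a,b,k) := \prod_{l=0}^{n-1} \frac{(a+b+kl)!\,(k(l+1))!}{(a+kl)!\,(b+kl)!\,k!}$. -/
open MvPolynomial Finset

namespace MorrisAux

/-- product of all differences of distinct entries -/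
def disc {R : Type*} [CommRing R] {n : ℕ} (v : Fin n → R) : R :=
  ∏ j, ∏ i, if i = j then 1 else v j - v i

lemma disc_eq {R : Type*} [CommRing R] {n : ℕ} (v : Fin n → R) (k : ℕ) :
    ∏ j : Fin n, ∏ i ∈ Finset.univ.erase j, (v j - v i) ^ k = disc v ^ k := by
  unfold disc
  rw [← Finset.prod_pow]
  refine Finset.prod_congr rfl fun j _ => ?_
  rw [← Finset.prod_pow, ← Finset.prod_erase (s := univ) (a := j)]
  · refine Finset.prod_congr rfl fun i hi => ?_
    rw [if_neg (Finset.ne_of_mem_erase hi)]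
  · simp

lemma disc_map {R S : Type*} [CommRing R] [CommRing S] {n : ℕ} (f : R →+* S) (v : Fin n → R) :
    f (disc v) = disc (fun i => f (v i)) := by
  unfold disc
  simp only [map_prod]
  refine Finset.prod_congr rfl fun j _ => Finset.prod_congr rfl fun i _ => ?_
  split_ifs <;> simp

lemma disc_perm {R : Type*} [CommRing R] {n : ℕ} (σ : Equiv.Perm (Fin n)) (v : Fin n → R) :
    disc (fun i => v (σ i)) = disc v := by
  unfold disc
  rw [← Equiv.prod_comp σ (fun j => ∏ i, if i = j then 1 else v j - v i)]
  refine Finset.prod_congr rfl fun j _ => ?_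
  rw [← Equiv.prod_comp σ (fun i => if i = σ j then 1 else v (σ j) - v i)]
  simp

lemma disc_succ {R : Type*} [CommRing R] {n : ℕ} (v : Fin (n + 1) → R) :
    disc v = (∏ l : Fin n, (v 0 - v l.succ) * (v l.succ - v 0)) * disc (fun i => v (Fin.succ i)) := by
  unfold disc
  rw [Fin.prod_univ_succ, Fin.prod_univ_succ]
  simp only [Fin.prod_univ_succ (fun i => if i = _ then _ else _)]
  simp [Finset.prod_mul_distrib, Fin.succ_ne_zero, (Fin.succ_ne_zero _).symm, mul_assoc]

lemma prod_deriv {R ι : Type*} [CommRing R] [Algebra ℚ R] [DecidableEq ι] (δ : Derivation ℚ R R)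
    (w : ι → R) (s : Finset ι) (hw : ∀ j ∈ s, δ (w j) = 1) :
    ∃ Q : ι → R, (∀ j ∈ s, w j * Q j = ∏ l ∈ s, (w l * (- w l))) ∧
      δ (∏ l ∈ s, (w l * (- w l))) = 2 * ∑ j ∈ s, Q j := by
  induction s using Finset.induction_on with
  | empty => exact ⟨fun _ => 0, by simp, by simp⟩
  | insert i s hi ih =>
    obtain ⟨Q, h1, h2⟩ := ih (fun j hj => hw j (mem_insert_of_mem hj))
    refine ⟨fun j => if j = i then (- w i) * ∏ l ∈ s, (w l * (- w l))
      else (w i * - w i) * Q j, ?_, ?_⟩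
    · intro j hj
      rw [prod_insert hi]
      dsimp only
      split_ifs with h
      · subst h; ring
      · rw [← h1 j ((mem_insert.1 hj).resolve_left h)]; ring
    · rw [prod_insert hi, sum_insert hi, Derivation.leibniz, h2, Derivation.leibniz, map_neg,
        hw i (mem_insert_self _ _)]
      have : ∑ x ∈ s, (if x = i then (- w i) * ∏ l ∈ s, (w l * (- w l))
          else (w i * - w i) * Q x) = (w i * - w i) * ∑ x ∈ s, Q x := by
        rw [mul_sum]
        refine sum_congr rfl fun x hx => ?_
        rw [if_neg]; rintro rfl; exact hi hx
      rw [this, if_pos rfl]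
      simp only [smul_eq_mul]
      ring

lemma deriv_prod_zero {R ι : Type*} [CommRing R] [Algebra ℚ R] (δ : Derivation ℚ R R)
    (w : ι → R) (s : Finset ι) (hw : ∀ j ∈ s, δ (w j) = 0) : δ (∏ l ∈ s, w l) = 0 := by
  classical
  induction s using Finset.induction_on with
  | empty => simp
  | insert i s hi ih =>
    rw [prod_insert hi, Derivation.leibniz, ih (fun j hj => hw j (mem_insert_of_mem hj)),
      hw i (mem_insert_self _ _)]
    simp

lemma disc_deriv {R : Type*} [CommRing R] [Algebra ℚ R] {n : ℕ} (δ : Derivation ℚ R R)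
    (v : Fin n → R) (i : Fin n) (h1 : δ (v i) = 1) (h0 : ∀ j, j ≠ i → δ (v j) = 0) :
    ∃ Q : Fin n → R, (∀ j ∈ univ.erase i, (v i - v j) * Q j = disc v) ∧
      δ (disc v) = 2 * ∑ j ∈ univ.erase i, Q j := by
  obtain ⟨Q, hQ1, hQ2⟩ := prod_deriv δ (fun j => v i - v j) (univ.erase i) (by
    intro j hj; simp [h1, h0 j (ne_of_mem_erase hj)])
  set E := ∏ j ∈ univ.erase i, ∏ l ∈ univ.erase i, (if l = j then 1 else v j - v l) with hE
  have hD : disc v = E * ∏ l ∈ univ.erase i, ((v i - v l) * (-(v i - v l))) := by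
    unfold disc
    rw [← mul_prod_erase univ _ (mem_univ i), ← mul_prod_erase univ _ (mem_univ i), if_pos rfl,
      one_mul]
    have : ∀ j ∈ univ.erase i, (∏ l, if l = j then 1 else v j - v l) =
        (v j - v i) * ∏ l ∈ univ.erase i, (if l = j then 1 else v j - v l) := by
      intro j hj
      rw [← mul_prod_erase univ _ (mem_univ i), if_neg (ne_of_mem_erase hj).symm]
    rw [prod_congr rfl this, prod_mul_distrib, ← hE, prod_mul_distrib]
    have : ∀ j ∈ univ.erase i, (if j = i then 1 else v i - v j) = v i - v j := by
      intro j hj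
      rw [if_neg (ne_of_mem_erase hj)]
    rw [prod_congr rfl this]
    simp only [neg_sub]
    ring
  have hE0 : δ E = 0 := by
    refine deriv_prod_zero _ _ _ fun j hj => deriv_prod_zero _ _ _ fun l hl => ?_
    split_ifs
    · simp
    · simp [h0 j (ne_of_mem_erase hj), h0 l (ne_of_mem_erase hl)]
  refine ⟨fun j => E * Q j, ?_, ?_⟩
  · intro j hj
    rw [hD, ← hQ1 j hj]; ring
  · rw [hD, Derivation.leibniz, hE0, hQ2, ← mul_sum]
    simp only [smul_eq_mul]
    ring

lemma coeff_X_mul_pderiv {σ : Type*} (i : σ) (m : σ →₀ ℕ) (p : MvPolynomial σ ℚ) :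
    coeff m (X i * pderiv i p) = m i * coeff m p := by
  classical
  induction p using MvPolynomial.induction_on' with
  | add p q hp hq => simp only [map_add, mul_add, coeff_add, hp, hq]
  | monomial u r =>
    rw [X_mul_pderiv_monomial, coeff_smul, coeff_monomial]
    split_ifs with h
    · subst h; simp
    · simp

/-- exponent vector -/
noncomputable def ex (n m d : ℕ) : Fin (n + 1) →₀ ℕ :=
  Finsupp.equivFunOnFinite.symm (Fin.cons m (fun _ : Fin n => d))

abbrev P (n : ℕ) := MvPolynomial (Fin (n + 1)) ℚ

lemma ex_succ (n m d : ℕ) (i : Fin n) : ex n m d i.succ = d := by simp [ex]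

lemma coeff_X0 (n m d : ℕ) (p : P n) : coeff (ex n (m + 1) d) (X 0 * p) = coeff (ex n m d) p := by
  have : ex n (m + 1) d = Finsupp.single 0 1 + ex n m d := by
    ext i
    refine Fin.cases ?_ (fun j => ?_) i
    · simp [ex, add_comm]
    · simp [ex]
  rw [this, coeff_X_mul]

/-- swap of two non-zero variables -/
noncomputable def tau {n : ℕ} (i j : Fin n) : P n →ₐ[ℚ] P n :=
  rename (Equiv.swap i.succ j.succ)

lemma tau_X0 {n : ℕ} (i j : Fin n) : tau i j (X 0 : P n) = X 0 := by
  simp [tau, Equiv.swap_apply_of_ne_of_ne, (Fin.succ_ne_zero _).symm]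

lemma tau_X {n : ℕ} (i j l : Fin n) : tau i j (X l.succ : P n) = X (Equiv.swap i j l).succ := by
  rw [tau, rename_X]
  congr 1
  rw [Equiv.swap_apply_def, Equiv.swap_apply_def]
  simp only [Fin.succ_inj]
  split_ifs <;> rfl

lemma coeff_tau {n : ℕ} (i j : Fin n) (m d : ℕ) (p : P n) :
    coeff (ex n m d) (tau i j p) = coeff (ex n m d) p := by
  have : (ex n m d).mapDomain (Equiv.swap i.succ j.succ) = ex n m d := by
    rw [← Finsupp.equivMapDomain_eq_mapDomain]
    ext l
    rw [Finsupp.equivMapDomain_apply, Equiv.symm_swap]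
    refine Fin.cases ?_ (fun j => ?_) l
    · rw [Equiv.swap_apply_of_ne_of_ne (Fin.succ_ne_zero _).symm (Fin.succ_ne_zero _).symm]
    · rw [Equiv.swap_apply_def]
      split_ifs <;> simp [ex_succ]
  conv_lhs => rw [← this]
  exact coeff_rename_mapDomain _ (Equiv.injective _) _ _

lemma anti {n : ℕ} (i j : Fin n) (m d : ℕ) (f q R : P n) (hR : tau i j R = -R)
    (hf : f - tau i j f = q * (X i.succ - X j.succ)) :
    2 * coeff (ex n m d) (f * R) = coeff (ex n m d) (q * ((X i.succ - X j.succ) * R)) := by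
  have h := coeff_tau i j m d (f * R)
  rw [map_mul, hR] at h
  have h2 : q * ((X i.succ - X j.succ) * R) = f * R + tau i j f * -R := by
    rw [← mul_assoc, ← hf]; ring
  rw [h2, coeff_add, h]; ring

/-- the linear factors -/
noncomputable def A (n a b : ℕ) : P n :=
  ∏ l : Fin n, ((X 0 - X l.succ) ^ a * (X l.succ - X 0) ^ b)

noncomputable def D (n : ℕ) : P n := disc (fun i : Fin n => (X i.succ : P n))

noncomputable def U {n : ℕ} (S : Finset (Fin n)) : P n := ∏ i ∈ S, (X 0 - X i.succ)

lemma tau_A {n : ℕ} (i j : Fin n) (a b : ℕ) : tau i j (A n a b) = A n a b := by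
  unfold A
  simp only [map_prod, map_mul, map_pow, map_sub, tau_X0, tau_X]
  exact Equiv.prod_comp (Equiv.swap i j)
    (fun l => ((X 0 - X l.succ : P n) ^ a * (X l.succ - X 0) ^ b))

lemma tau_D {n : ℕ} (i j : Fin n) : tau i j (D n) = D n := by
  unfold D
  have := disc_map (tau i j : P n →ₐ[ℚ] P n).toRingHom (fun i : Fin n => (X i.succ : P n))
  refine this.trans ?_
  simp only [AlgHom.toRingHom_eq_coe, RingHom.coe_coe, tau_X]
  exact disc_perm (Equiv.swap i j) (fun i : Fin n => (X i.succ : P n))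

lemma tau_U {n : ℕ} (i j : Fin n) (S : Finset (Fin n)) (h : i ∈ S ↔ j ∈ S) :
    tau i j (U S) = U S := by
  unfold U
  simp only [map_prod, map_sub, tau_X0, tau_X]
  refine Finset.prod_equiv (Equiv.swap i j) (fun l => ?_) (fun _ _ => rfl)
  rw [Equiv.swap_apply_def]
  split_ifs with h1 h2
  · subst h1; exact h
  · subst h2; exact h.symm
  · rfl

lemma pd_succ {n : ℕ} {i j : Fin n} (h : j ≠ i) : pderiv i.succ (X j.succ : P n) = 0 :=
  pderiv_X_of_ne (by simpa using h)

lemma pd_zero {n : ℕ} (i : Fin n) : pderiv i.succ (X 0 : P n) = 0 :=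
  pderiv_X_of_ne (Fin.succ_ne_zero _).symm

/-- derivative of the linear factors -/
lemma deriv_UA {n : ℕ} (i : Fin n) (S : Finset (Fin n)) (hi : i ∉ S) (a b : ℕ) :
    pderiv i.succ (U (insert i S) * A n a b) = -((a + b + 1 : ℕ) : P n) * (U S * A n a b) := by
  have hU : U (insert i S) = (X 0 - X i.succ) * U S := by
    unfold U; rw [prod_insert hi]
  set B : P n := ∏ l ∈ univ.erase i, ((X 0 - X l.succ) ^ a * (X l.succ - X 0) ^ b) with hB
  have hA : A n a b = ((X 0 - X i.succ) ^ a * (X i.succ - X 0) ^ b) * B := by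
    unfold A; rw [← mul_prod_erase univ _ (mem_univ i)]
  have hB0 : pderiv i.succ B = 0 := by
    refine deriv_prod_zero _ _ _ fun l hl => ?_
    have := ne_of_mem_erase hl
    simp [Derivation.leibniz, Derivation.leibniz_pow, pd_succ this]
  have hU0 : pderiv i.succ (U S) = 0 := by
    refine deriv_prod_zero _ _ _ fun l hl => ?_
    have : l ≠ i := by rintro rfl; exact hi hl
    simp [pd_succ this]
  have hneg : (X i.succ - X 0 : P n) ^ b = (-1) ^ b * (X 0 - X i.succ) ^ b := by
    rw [← mul_pow]; congr 1; ring
  have e1 : U (insert i S) * A n a b =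
      (X 0 - X i.succ) ^ (a + b + 1) * ((-1) ^ b * U S * B) := by
    rw [hU, hA, hneg]; ring
  have hc : pderiv i.succ ((-1) ^ b * U S * B) = 0 := by
    simp [Derivation.leibniz, Derivation.leibniz_pow, hB0, hU0]
  rw [e1, Derivation.leibniz, hc, Derivation.leibniz_pow, map_sub, pd_zero, pderiv_X_self, hA, hneg]
  simp only [smul_eq_mul, nsmul_eq_mul, Nat.add_sub_cancel]
  ring

lemma pair {n : ℕ} (i j : Fin n) (S : Finset (Fin n)) (hi : i ∉ S) (hj : j ≠ i) (a b k m d : ℕ)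
    (Q : P n) (hQ : (X i.succ - X j.succ) * Q = D n) :
    (k : ℚ) * 2 * coeff (ex n (m + 1) d)
        (X i.succ * U (insert i S) * (A n a b * D n ^ (k - 1) * Q)) =
      k * (if j ∈ S then coeff (ex n (m + 1) d) (U (insert i S) * (A n a b * D n ^ k))
        else 2 * coeff (ex n (m + 1) d) (U (insert i S) * (A n a b * D n ^ k))
          - coeff (ex n m d) (U S * (A n a b * D n ^ k))) := by
  rcases Nat.eq_zero_or_pos k with rfl | hk
  · simp
  have hne : (X i.succ - X j.succ : P n) ≠ 0 := by
    intro h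
    have := X_injective (R := ℚ) (sub_eq_zero.1 h)
    exact hj (Fin.succ_injective _ this).symm
  have ti : tau i j (X i.succ : P n) = X j.succ := by rw [tau_X, Equiv.swap_apply_left]
  have tj : tau i j (X j.succ : P n) = X i.succ := by rw [tau_X, Equiv.swap_apply_right]
  have tQ : tau i j Q = -Q := by
    have h := congrArg (tau i j) hQ
    rw [tau_D, ← hQ, map_mul, map_sub, ti, tj] at h
    apply mul_left_cancel₀ hne
    linear_combination -h
  have tR : tau i j (A n a b * D n ^ (k - 1) * Q) = -(A n a b * D n ^ (k - 1) * Q) := by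
    rw [map_mul, map_mul, map_pow, tau_A, tau_D, tQ]; ring
  have hR : (X i.succ - X j.succ) * (A n a b * D n ^ (k - 1) * Q) = A n a b * D n ^ k := by
    obtain ⟨k, rfl⟩ : ∃ k', k = k' + 1 := ⟨k - 1, by omega⟩
    rw [Nat.add_sub_cancel, pow_succ, ← hQ]; ring
  rw [mul_assoc]
  congr 1
  by_cases hS : j ∈ S
  · rw [if_pos hS, anti i j (m + 1) d _ (U (insert i S)) _ tR, hR]
    rw [map_mul, ti, tau_U]
    · ring
    · simp [hS]
  · rw [if_neg hS]
    have hU : U (insert i S) = (X 0 - X i.succ) * U S := by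
      unfold U; rw [prod_insert hi]
    have hU2 : U (insert j S) = (X 0 - X j.succ) * U S := by
      unfold U; rw [prod_insert hS]
    have tS : tau i j (U S) = U S := tau_U i j S (by simp [hi, hS])
    have tU : tau i j (U (insert i S)) = U (insert j S) := by
      rw [hU, hU2, map_mul, map_sub, tau_X0, ti, tS]
    rw [anti i j (m + 1) d _ (U (insert i S) + U (insert j S) - X 0 * U S) _ tR, hR]
    · have e : coeff (ex n (m + 1) d) (U (insert j S) * (A n a b * D n ^ k)) =
          coeff (ex n (m + 1) d) (U (insert i S) * (A n a b * D n ^ k)) := by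
        rw [← coeff_tau i j _ _ (U (insert i S) * (A n a b * D n ^ k)), map_mul, map_mul, map_pow,
          tau_A, tau_D, tU]
      rw [sub_mul, add_mul, coeff_sub, coeff_add, e, mul_assoc (X 0), coeff_X0]
      ring
    · rw [map_mul, ti, tU, hU, hU2]; ring

lemma recur {n : ℕ} (i : Fin n) (S : Finset (Fin n)) (hi : i ∉ S) (a b k m : ℕ) :
    ((a + 1 + k * (n - 1 - #S) : ℕ) : ℚ) *
      coeff (ex n (m + 1) (b + (n - 1) * k)) (U (insert i S) * (A n a b * D n ^ k)) =
    ((a + b + 1 + k * (n - 1 - #S) : ℕ) : ℚ) *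
      coeff (ex n m (b + (n - 1) * k)) (U S * (A n a b * D n ^ k)) := by
  obtain ⟨Q, hQ1, hQ2⟩ := disc_deriv (pderiv i.succ) (fun i : Fin n => (X i.succ : P n)) i
    (pderiv_X_self _) (fun j hj => pd_succ hj)
  set d := b + (n - 1) * k with hd
  have h := coeff_X_mul_pderiv i.succ (ex n (m + 1) d) (U (insert i S) * (A n a b * D n ^ k))
  have hU : U (insert i S) = (X 0 - X i.succ) * U S := by
    unfold U; rw [prod_insert hi]
  have e1 : X i.succ * pderiv i.succ (U (insert i S) * (A n a b * D n ^ k)) =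
      C ((a + b + 1 : ℕ) : ℚ) * (U (insert i S) * (A n a b * D n ^ k))
      - C ((a + b + 1 : ℕ) : ℚ) * (X 0 * (U S * (A n a b * D n ^ k)))
      + ∑ j ∈ univ.erase i, C ((k : ℚ) * 2) *
          (X i.succ * U (insert i S) * (A n a b * D n ^ (k - 1) * Q j)) := by
    rw [← mul_assoc (U (insert i S)), Derivation.leibniz, deriv_UA i S hi, Derivation.leibniz_pow]
    have : pderiv i.succ (D n) = 2 * ∑ j ∈ univ.erase i, Q j := hQ2
    rw [this, ← mul_sum, ← mul_sum, ← mul_sum]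
    simp only [smul_eq_mul, nsmul_eq_mul, C_mul, map_natCast]
    rw [show (C 2 : P n) = 2 from map_ofNat C 2, hU]
    ring
  rw [e1, coeff_add, coeff_sub, coeff_C_mul, coeff_C_mul, coeff_X0, coeff_sum, ex_succ] at h
  simp only [coeff_C_mul] at h
  rw [sum_congr rfl (fun j hj => pair i j S hi (ne_of_mem_erase hj) a b k m d (Q j) (hQ1 j hj)),
    ← mul_sum] at h
  have hS : S ⊆ univ.erase i := fun x hx => mem_erase.2 ⟨by rintro rfl; exact hi hx, mem_univ _⟩
  have hc : (univ.erase i : Finset (Fin n)).card = n - 1 := by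
    rw [card_erase_of_mem (mem_univ _), card_univ, Fintype.card_fin]
  have hle : #S ≤ n - 1 := hc ▸ card_le_card hS
  have hn : 1 ≤ n := by have := i.2; omega
  rw [← sum_sdiff hS, sum_congr (g := fun _ => _) rfl (fun x hx => if_neg (mem_sdiff.1 hx).2),
    sum_congr (s₁ := S) (g := fun _ => _) rfl (fun x hx => if_pos hx), sum_const, sum_const,
    card_sdiff_of_subset hS, hc] at h
  simp only [nsmul_eq_mul] at h
  rw [hd] at h ⊢
  push_cast [Nat.cast_sub hle, Nat.cast_sub hn] at h ⊢
  linear_combination h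

lemma recur_all {n : ℕ} (S : Finset (Fin n)) (a b k m : ℕ) :
    (∏ r ∈ range #S, ((a + 1 + k * (n - 1 - r) : ℕ) : ℚ)) *
      coeff (ex n (m + #S) (b + (n - 1) * k)) (U S * (A n a b * D n ^ k)) =
    (∏ r ∈ range #S, ((a + b + 1 + k * (n - 1 - r) : ℕ) : ℚ)) *
      coeff (ex n m (b + (n - 1) * k)) (A n a b * D n ^ k) := by
  induction S using Finset.induction_on with
  | empty => simp [U]
  | insert i S hi ih =>
    rw [card_insert_of_notMem hi, prod_range_succ, prod_range_succ, ← add_assoc]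
    have := recur i S hi a b k (m + #S)
    linear_combination (∏ r ∈ range #S, ((a + 1 + k * (n - 1 - r) : ℕ) : ℚ)) * this +
      ((a + b + 1 + k * (n - 1 - #S) : ℕ) : ℚ) * ih

/-- the left-hand side -/
noncomputable def CT (n a b k : ℕ) : ℚ := coeff (ex n (n * a) (b + (n - 1) * k)) (A n a b * D n ^ k)

lemma CT_step (n a b k : ℕ) :
    (∏ l ∈ range n, ((a + 1 + k * l : ℕ) : ℚ)) * CT n (a + 1) b k =
    (∏ l ∈ range n, ((a + b + 1 + k * l : ℕ) : ℚ)) * CT n a b k := by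
  have h := recur_all (univ : Finset (Fin n)) a b k (n * a)
  rw [card_univ, Fintype.card_fin, prod_range_reflect (fun l => ((a + 1 + k * l : ℕ) : ℚ)),
    prod_range_reflect (fun l => ((a + b + 1 + k * l : ℕ) : ℚ))] at h
  have e : U univ * (A n a b * D n ^ k) = A n (a + 1) b * D n ^ k := by
    rw [← mul_assoc]; congr 1
    unfold U A
    rw [← prod_mul_distrib]
    refine prod_congr rfl fun l _ => ?_
    ring
  rw [e, ← mul_add_one] at h
  exact h

/-- the right-hand side -/
noncomputable def M (n a b k : ℕ) : ℚ := ∏ l ∈ range n,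
          (((a + b + k * l).factorial * (k * (l + 1)).factorial : ℚ) /
            ((a + k * l).factorial * (b + k * l).factorial * k.factorial))

lemma M_step (n a b k : ℕ) :
    (∏ l ∈ range n, ((a + 1 + k * l : ℕ) : ℚ)) * M n (a + 1) b k =
    (∏ l ∈ range n, ((a + b + 1 + k * l : ℕ) : ℚ)) * M n a b k := by
  unfold M
  rw [← prod_mul_distrib, ← prod_mul_distrib]
  refine prod_congr rfl fun l _ => ?_
  have h1 : a + 1 + b + k * l = (a + b + k * l) + 1 := by ring
  have h2 : a + 1 + k * l = (a + k * l) + 1 := by ring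
  have h3 : a + b + 1 + k * l = (a + b + k * l) + 1 := by ring
  rw [h1, h2, h3, Nat.factorial_succ, Nat.factorial_succ]
  have := Nat.factorial_ne_zero (a + k * l)
  have := Nat.factorial_ne_zero (b + k * l)
  have := Nat.factorial_ne_zero k
  have : ((a + k * l + 1 : ℕ) : ℚ) ≠ 0 := by positivity
  rw [Nat.cast_mul, Nat.cast_mul]
  field_simp

lemma M_base (n b k : ℕ) : M (n + 1) 0 b k = M n k k k := by
  unfold M
  rw [prod_range_succ']
  have hb := Nat.factorial_ne_zero b
  have hk := Nat.factorial_ne_zero k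
  have : ((0 + b + k * 0).factorial * (k * (0 + 1)).factorial : ℚ) /
            ((0 + k * 0).factorial * (b + k * 0).factorial * k.factorial) = 1 := by
    simp only [mul_zero, add_zero, zero_add, Nat.factorial_zero, mul_one, Nat.cast_one, one_mul]
    exact div_self (by positivity)
  rw [this, mul_one]
  refine prod_congr rfl fun l _ => ?_
  rw [show k + k + k * l = k * (l + 1 + 1) by ring, show k + k * l = k * (l + 1) by ring, zero_add,
    zero_add]
  have := Nat.factorial_ne_zero (k * (l + 1))
  have := Nat.factorial_ne_zero (b + k * (l + 1))
  field_simp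

/-- Dyson constant term -/
noncomputable def Dy (n k : ℕ) : ℚ :=
  coeff (Finsupp.equivFunOnFinite.symm (fun _ : Fin n => (n - 1) * k))
    (disc (fun i : Fin n => (X i : MvPolynomial (Fin n) ℚ)) ^ k)

lemma Dy_succ (n k : ℕ) : Dy (n + 1) k = CT n k k k := by
  unfold Dy CT
  rw [disc_succ, mul_pow]
  congr 1
  · unfold ex
    congr 1
    ext i
    refine Fin.cases ?_ (fun j => ?_) i
    · simp
    · have : 1 ≤ n := by have := j.2; omega
      obtain ⟨n, rfl⟩ : ∃ n', n = n' + 1 := ⟨n - 1, by omega⟩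
      simp; ring
  · unfold A D
    rw [← prod_pow]
    simp only [mul_pow]

lemma CT_zero (n b k : ℕ) : CT n 0 b k = Dy n k := by
  unfold Dy CT
  have e : ex n (n * 0) (b + (n - 1) * k) =
      Finsupp.cons 0 (Finsupp.equivFunOnFinite.symm (fun _ : Fin n => b + (n - 1) * k)) := by
    ext i
    refine Fin.cases ?_ (fun j => ?_) i <;> simp [ex]
  rw [e, ← finSuccEquiv_coeff_coeff, Polynomial.coeff_zero_eq_eval_zero]
  have h2 : Polynomial.eval 0 (finSuccEquiv ℚ n (A n 0 b * D n ^ k)) =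
      monomial (Finsupp.equivFunOnFinite.symm (fun _ : Fin n => b)) 1 *
      disc (fun i : Fin n => (X i : MvPolynomial (Fin n) ℚ)) ^ k := by
    rw [map_mul, map_pow, Polynomial.eval_mul, Polynomial.eval_pow]
    congr 1
    · unfold A
      rw [map_prod, Polynomial.eval_prod, monomial_eq]
      simp [finSuccEquiv_X_zero, finSuccEquiv_X_succ, Finsupp.prod_fintype]
    · congr 1
      have := disc_map ((Polynomial.evalRingHom (0 : MvPolynomial (Fin n) ℚ)).comp
        (finSuccEquiv ℚ n).toRingEquiv.toRingHom) (fun i : Fin n => (X i.succ : P n))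
      refine this.trans ?_
      simp [finSuccEquiv_X_succ]
  rw [h2]
  have h3 : (Finsupp.equivFunOnFinite.symm (fun _ : Fin n => b + (n - 1) * k)) =
      (Finsupp.equivFunOnFinite.symm (fun _ : Fin n => b)) +
      (Finsupp.equivFunOnFinite.symm (fun _ : Fin n => (n - 1) * k)) := by
    ext i; simp
  rw [h3, coeff_monomial_mul, one_mul]

theorem CT_eq_M (n a b k : ℕ) : CT n a b k = M n a b k := by
  induction n generalizing a b with
  | zero =>
    have e : ex 0 (0 * a) (b + (0 - 1) * k) = 0 := by
      ext i; fin_cases i; simp [ex]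
    unfold CT M
    rw [e]
    simp [A, D, disc]
  | succ n ih =>
    induction a with
    | zero => rw [CT_zero, Dy_succ, ih, M_base]
    | succ a iha =>
      have h1 := CT_step (n + 1) a b k
      rw [iha, ← M_step] at h1
      refine mul_left_cancel₀ ?_ h1
      refine prod_ne_zero_iff.2 fun l _ => ?_
      positivity

end MorrisAux

/-- **Morris's constant term identity.** The constant term of
`H(x_0,…,x_n;a,b,k) = ∏_{l=1}^n (1-x_l/x_0)^a (1-x_0/x_l)^b ∏_{1≤i≠j≤n} (1-x_i/x_j)^k`
equals `M_n(a,b,k) = ∏_{l=0}^{n-1} (a+b+kl)! (k(l+1))! / ((a+kl)! (b+kl)! k!)`.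
Clearing denominators, the constant term equals the coefficient of
`x_0^(n*a) ∏_{l=1}^n x_l^(b + (n-1)k)` in
`∏_{l=1}^n (x_0 - x_l)^a (x_l - x_0)^b ∏_{1≤i≠j≤n} (x_j - x_i)^k`. -/
theorem morris_identity (n a b k : ℕ) (hn : 1 ≤ n) :
    MvPolynomial.coeff
      (Finsupp.equivFunOnFinite.symm
        (Fin.cons (n * a) (fun _ : Fin n => b + (n - 1) * k)))
      ((∏ l : Fin n,
          (X (0 : Fin (n + 1)) - X l.succ : MvPolynomial (Fin (n + 1)) ℚ) ^ a *
            (X l.succ - X (0 : Fin (n + 1))) ^ b) *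
        ∏ j : Fin n, ∏ i ∈ Finset.univ.erase j,
          (X j.succ - X i.succ : MvPolynomial (Fin (n + 1)) ℚ) ^ k)
      = ∏ l ∈ Finset.range n,
          (((a + b + k * l).factorial * (k * (l + 1)).factorial : ℚ) /
            ((a + k * l).factorial * (b + k * l).factorial * k.factorial)) := by
  have h := MorrisAux.CT_eq_M n a b k
  unfold MorrisAux.CT MorrisAux.M MorrisAux.A MorrisAux.D MorrisAux.ex at h
  rw [← h]
  congr 2
  exact MorrisAux.disc_eq (fun i : Fin n => (X i.succ : MvPolynomial (Fin (n + 1)) ℚ)) k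
end

section
/- For nonnegative integers $a,b,k$, $n\ge 1$, and $0\le m\le n$, the constant term of $A_m(x_0,\ldots,x_n;a,b,k) := \prod_{l=1}^n (1-x_l/x_0)^{\chi(l\le m)} \cdot H(x_0,\ldots,x_n;a,b,k)$ equals $\prod_{l=0}^{n-1} \frac{[a+b+kl+\chi(l\ge n-m)]!\,(k(l+1))!}{[a+kl+\chi(l\ge n-m)]!\,(b+kl)!\,k!}$. -/
open MvPolynomial Finset

namespace Aomoto

set_option linter.unusedSectionVars false
set_option linter.unusedSimpArgs false

variable {τ : Type*} [DecidableEq τ]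

/-- The product of all differences. -/
noncomputable def VV (I : Finset τ) : MvPolynomial τ ℚ :=
  ∏ j ∈ I, ∏ i ∈ I.erase j, (X j - X i)

/-- The Morris weight. -/
noncomputable def WW (z : τ) (I : Finset τ) (a b k : ℕ) : MvPolynomial τ ℚ :=
  (∏ l ∈ I, (X z - X l) ^ a * (X l - X z) ^ b) * VV I ^ k

/-- The Aomoto polynomial. -/
noncomputable def FF (z : τ) (I S : Finset τ) (a b k : ℕ) : MvPolynomial τ ℚ :=
  (∏ l ∈ S, (X z - X l)) * WW z I a b k

/-- The exponent. -/
noncomputable def DD (z : τ) (I : Finset τ) (p q : ℕ) : τ →₀ ℕ :=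
  Finsupp.single z p + ∑ i ∈ I, Finsupp.single i q

lemma VV_insert (s : τ) (J : Finset τ) (hs : s ∉ J) :
    VV (insert s J) = (∏ j ∈ J, (X s - X j) * (X j - X s)) * VV J := by
  unfold VV
  rw [Finset.prod_insert hs, Finset.erase_insert hs]
  have h : ∏ j ∈ J, ∏ i ∈ (insert s J).erase j, (X j - X i : MvPolynomial τ ℚ)
      = ∏ j ∈ J, ((X j - X s) * ∏ i ∈ J.erase j, (X j - X i)) := by
    refine Finset.prod_congr rfl fun j hj => ?_
    have hne : s ≠ j := fun h => hs (h ▸ hj)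
    rw [Finset.erase_insert_of_ne hne, Finset.prod_insert]
    simp [hs]
  rw [h]
  simp only [Finset.prod_mul_distrib]
  ring

lemma der_prod_zero {ι : Type*} (s : τ) (t : Finset ι) (f : ι → MvPolynomial τ ℚ)
    (h : ∀ i ∈ t, pderiv s (f i) = 0) : pderiv s (∏ i ∈ t, f i) = 0 := by
  classical
  induction t using Finset.induction_on with
  | empty => simp
  | insert i t hi ih =>
    rw [Finset.prod_insert hi, Derivation.leibniz, h i (by simp),
      ih (fun j hj => h j (by simp [hj]))]
    simp

lemma der_prod (s : τ) (t : Finset τ) (f g q : τ → MvPolynomial τ ℚ)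
    (h : ∀ i ∈ t, f i = g i * q i) (P : MvPolynomial τ ℚ) :
    ∃ Q : τ → MvPolynomial τ ℚ, (∀ i ∈ t, g i * Q i = (∏ i ∈ t, f i) * P) ∧
      (pderiv s (∏ i ∈ t, f i)) * P * 1 = ∑ i ∈ t, (pderiv s (f i)) * (P * ∏ l ∈ t.erase i, f l) ∧
      ∀ i ∈ t, Q i = q i * (P * ∏ l ∈ t.erase i, f l) := by
  refine ⟨fun i => q i * (P * ∏ l ∈ t.erase i, f l), ?_, ?_, fun _ _ => rfl⟩
  · intro i hi
    rw [← Finset.mul_prod_erase t f hi, h i hi]; ring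
  · clear h
    induction t using Finset.induction_on generalizing P with
    | empty => simp
    | insert i t hi ih =>
      rw [Finset.prod_insert hi, Derivation.leibniz, Finset.sum_insert hi,
        Finset.erase_insert hi]
      have h2 := ih (P * f i)
      simp only [smul_eq_mul]
      have : ∑ x ∈ t, (pderiv s (f x)) * (P * ∏ l ∈ (insert i t).erase x, f l)
          = ∑ x ∈ t, (pderiv s (f x)) * (P * f i * ∏ l ∈ t.erase x, f l) := by
        refine Finset.sum_congr rfl fun x hx => ?_
        have hne : i ≠ x := fun h => hi (h ▸ hx)
        rw [Finset.erase_insert_of_ne hne, Finset.prod_insert (by simp [hi])]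
        ring
      rw [this, ← h2]; ring

lemma der_diff_zero (s i j : τ) (hi : i ≠ s) (hj : j ≠ s) :
    pderiv s (X i - X j : MvPolynomial τ ℚ) = 0 := by
  rw [map_sub, pderiv_X_of_ne hi, pderiv_X_of_ne hj, sub_zero]

lemma der_pow_zero (s : τ) (P : MvPolynomial τ ℚ) (a : ℕ) (h : pderiv s P = 0) :
    pderiv s (P ^ a) = 0 := by
  rw [Derivation.leibniz_pow, h]; simp

lemma der_mul_zero (s : τ) (P Q : MvPolynomial τ ℚ) (h : pderiv s P = 0) (h' : pderiv s Q = 0) :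
    pderiv s (P * Q) = 0 := by
  rw [Derivation.leibniz, h, h']; simp

lemma der_VV_zero (s : τ) (J : Finset τ) (hs : s ∉ J) : pderiv s (VV J) = 0 := by
  refine der_prod_zero _ _ _ fun j hj => der_prod_zero _ _ _ fun i hi => der_diff_zero _ _ _ ?_ ?_
  · rintro rfl; exact hs hj
  · rintro rfl; exact hs (Finset.mem_of_mem_erase hi)

lemma exists_Q (s : τ) (J : Finset τ) (hs : s ∉ J) :
    ∃ Q : τ → MvPolynomial τ ℚ, (∀ j ∈ J, (X s - X j) * Q j = VV (insert s J)) ∧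
      pderiv s (VV (insert s J)) = ∑ j ∈ J, 2 * Q j := by
  obtain ⟨Q, h1, h2, h3⟩ := der_prod s J (fun j => (X s - X j) * (X j - X s))
    (fun j => X s - X j) (fun j => X j - X s) (fun _ _ => rfl) (VV J)
  refine ⟨Q, ?_, ?_⟩
  · intro j hj; rw [h1 j hj, VV_insert _ _ hs]
  · rw [VV_insert _ _ hs, Derivation.leibniz, der_VV_zero s J hs]
    simp only [smul_eq_mul, mul_zero, zero_add]
    rw [mul_comm, ← mul_one (_ * VV J), h2]
    refine Finset.sum_congr rfl fun j hj => ?_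
    have hne : j ≠ s := fun h => hs (h ▸ hj)
    rw [h3 j hj, Derivation.leibniz, map_sub, map_sub, pderiv_X_of_ne hne, pderiv_X_self]
    simp only [smul_eq_mul]; ring

lemma prod_perm_eq (e : Equiv.Perm τ) (S : Finset τ) (hS : ∀ l, l ∈ S ↔ e l ∈ S)
    (f : τ → MvPolynomial τ ℚ) : ∏ l ∈ S, f (e l) = ∏ l ∈ S, f l :=
  Finset.prod_equiv e hS (fun _ _ => rfl)

lemma rename_VV (e : Equiv.Perm τ) (I : Finset τ) (hI : ∀ l, l ∈ I ↔ e l ∈ I) :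
    rename e (VV I) = VV I := by
  unfold VV
  simp only [map_prod, map_sub, rename_X]
  rw [← prod_perm_eq e I hI (fun j => ∏ i ∈ I.erase j, (X j - X i))]
  refine Finset.prod_congr rfl fun j _ => ?_
  refine Finset.prod_equiv e (fun i => ?_) (fun _ _ => rfl)
  simp [← hI]

lemma rename_FF (e : Equiv.Perm τ) (z : τ) (I S : Finset τ) (a b k : ℕ) (hz : e z = z)
    (hI : ∀ l, l ∈ I ↔ e l ∈ I) (hS : ∀ l, l ∈ S ↔ e l ∈ S) :
    rename e (FF z I S a b k) = FF z I S a b k := by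
  unfold FF WW
  simp only [map_mul, map_pow, rename_VV e I hI, map_prod, map_sub, rename_X, hz]
  rw [prod_perm_eq e S hS (fun l => X z - X l),
    prod_perm_eq e I hI (fun l => (X z - X l) ^ a * (X l - X z) ^ b)]

lemma mapDomain_DD (e : Equiv.Perm τ) (z : τ) (I : Finset τ) (p q : ℕ) (hz : e z = z)
    (hI : ∀ l, l ∈ I ↔ e l ∈ I) : (DD z I p q).mapDomain e = DD z I p q := by
  unfold DD
  rw [Finsupp.mapDomain_add, Finsupp.mapDomain_single, hz, Finsupp.mapDomain_finsetSum]
  simp only [Finsupp.mapDomain_single]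
  congr 1
  exact Finset.sum_equiv e hI (fun _ _ => rfl)

lemma coeff_rename_DD (e : Equiv.Perm τ) (z : τ) (I : Finset τ) (p q : ℕ) (hz : e z = z)
    (hI : ∀ l, l ∈ I ↔ e l ∈ I) (P : MvPolynomial τ ℚ) :
    coeff (DD z I p q) (rename e P) = coeff (DD z I p q) P := by
  conv_lhs => rw [← mapDomain_DD e z I p q hz hI]
  exact coeff_rename_mapDomain e e.injective P _

lemma swap_mem (s j : τ) (I : Finset τ) (h : s ∈ I ↔ j ∈ I) (l : τ) :
    l ∈ I ↔ Equiv.swap s j l ∈ I := by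
  rcases eq_or_ne l s with rfl | h1
  · simp [h]
  rcases eq_or_ne l j with rfl | h2
  · simp [h]
  rw [Equiv.swap_apply_of_ne_of_ne h1 h2]

lemma X_sub_ne (s j : τ) (h : s ≠ j) : (X s - X j : MvPolynomial τ ℚ) ≠ 0 := by
  intro h'
  exact h (X_injective (sub_eq_zero.mp h'))

lemma anti (s j : τ) (h : s ≠ j) (P H : MvPolynomial τ ℚ) (hP : (X s - X j) * H = P)
    (hr : rename (Equiv.swap s j) P = P) : rename (Equiv.swap s j) H = -H := by
  have h1 := congrArg (rename (Equiv.swap s j)) hP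
  rw [hr] at h1
  simp only [map_mul, map_sub, rename_X, Equiv.swap_apply_left, Equiv.swap_apply_right] at h1
  apply mul_left_cancel₀ (X_sub_ne j s h.symm)
  rw [h1, ← hP]; ring

lemma coeff_euler (s : τ) (d : τ →₀ ℕ) (P : MvPolynomial τ ℚ) :
    coeff d (X s * pderiv s P) = d s * coeff d P := by
  induction P using MvPolynomial.induction_on' with
  | monomial u c =>
    rw [pderiv_monomial, X, monomial_mul, coeff_monomial, coeff_monomial]
    rcases Nat.eq_zero_or_pos (u s) with h0 | h0
    · simp only [h0, Nat.cast_zero, mul_zero, ite_self]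
      split_ifs with h
      · subst h; simp [h0]
      · simp
    · have : Finsupp.single s 1 + (u - Finsupp.single s 1) = u := by
        ext i
        rcases eq_or_ne s i with rfl | hi
        · simp; omega
        · simp [Finsupp.single_apply, hi]
      rw [this]
      split_ifs with h
      · subst h; ring
      · simp
  | add p q hp hq => rw [map_add, mul_add, coeff_add, hp, hq, coeff_add]; ring

lemma DD_apply_mem (z : τ) (I : Finset τ) (p q : ℕ) (hz : z ∉ I) (s : τ) (hs : s ∈ I) :
    DD z I p q s = q := by
  have hne : z ≠ s := fun h => hz (h ▸ hs)
  simp [DD, Finsupp.single_apply, hne, Finsupp.finsetSum_apply, hs]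

lemma coeff_z_mul (z : τ) (I : Finset τ) (p q : ℕ) (P : MvPolynomial τ ℚ) :
    coeff (DD z I (p + 1) q) (X z * P) = coeff (DD z I p q) P := by
  have : DD z I (p + 1) q = Finsupp.single z 1 + DD z I p q := by
    unfold DD; rw [add_comm p 1, Finsupp.single_add, add_assoc]
  rw [this, coeff_X_mul]

lemma der_uE (z s : τ) (hzs : z ≠ s) (a b : ℕ) :
    pderiv s ((X z - X s) * ((X z - X s) ^ a * (X s - X z) ^ b) : MvPolynomial τ ℚ)
      = -((a + b + 1 : ℕ) : MvPolynomial τ ℚ) * ((X z - X s) ^ a * (X s - X z) ^ b) := by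
  have h : (X s - X z : MvPolynomial τ ℚ) = (-1) * (X z - X s) := by ring
  have h2 : (X z - X s) * ((X z - X s) ^ a * (X s - X z) ^ b)
      = C ((-1) ^ b) * (X z - X s : MvPolynomial τ ℚ) ^ (a + b + 1) := by
    rw [h, mul_pow]; simp only [map_pow, map_neg, map_one]; ring
  rw [h2, pderiv_C_mul, Derivation.leibniz_pow, map_sub, pderiv_X_of_ne hzs, pderiv_X_self, h,
    mul_pow]
  simp only [map_pow, map_neg, map_one, smul_eq_mul, nsmul_eq_mul, Nat.add_sub_cancel]
  ring

lemma recursion (z s : τ) (J S : Finset τ) (a b k p : ℕ) (hs : s ∉ J) (hz : z ∉ insert s J)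
    (hS : S ⊆ J) :
    ((a : ℚ) + 1 + k * ((#J : ℚ) - #S)) *
      coeff (DD z (insert s J) (p + 1) (b + #J * k)) (FF z (insert s J) (insert s S) a b k) =
    ((a : ℚ) + b + 1 + k * ((#J : ℚ) - #S)) *
      coeff (DD z (insert s J) p (b + #J * k)) (FF z (insert s J) S a b k) := by
  have hzs : z ≠ s := by rintro rfl; simp at hz
  have hzJ : z ∉ J := fun h => hz (by simp [h])
  have hsS : s ∉ S := fun h => hs (hS h)
  obtain ⟨Q, hQ1, hQ2⟩ := exists_Q s J hs
  rw [← coeff_z_mul z (insert s J) p]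
  set d := DD z (insert s J) (p + 1) (b + #J * k) with hd
  set u : MvPolynomial τ ℚ := X z - X s with hu
  set E : MvPolynomial τ ℚ := (X z - X s) ^ a * (X s - X z) ^ b with hE
  set V := VV (insert s J) with hV
  set c : MvPolynomial τ ℚ := (∏ l ∈ S, (X z - X l)) *
    ∏ l ∈ J, (X z - X l) ^ a * (X l - X z) ^ b with hc
  have hF0 : FF z (insert s J) S a b k = c * E * V ^ k := by
    unfold FF WW; rw [Finset.prod_insert hs]; ring
  have hF1 : FF z (insert s J) (insert s S) a b k = c * (u * E) * V ^ k := by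
    unfold FF WW; rw [Finset.prod_insert hs, Finset.prod_insert hsS]; ring
  have hne : ∀ j ∈ J, j ≠ s := fun j hj h => hs (h ▸ hj)
  have hc0 : pderiv s c = 0 := by
    apply der_mul_zero
    · exact der_prod_zero _ _ _ fun l hl => der_diff_zero _ _ _ hzs (hne l (hS hl))
    · refine der_prod_zero _ _ _ fun l hl => der_mul_zero _ _ _ ?_ ?_
      · exact der_pow_zero _ _ _ (der_diff_zero _ _ _ hzs (hne l hl))
      · exact der_pow_zero _ _ _ (der_diff_zero _ _ _ (hne l hl) hzs)
  have huE := der_uE z s hzs a b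
  set F0 := FF z (insert s J) S a b k with hF0'
  set F1 := FF z (insert s J) (insert s S) a b k with hF1'
  have hkey : ∀ j ∈ J, (k : MvPolynomial τ ℚ) * ((X s - X j) * (c * E * V ^ (k - 1) * Q j))
      = (k : MvPolynomial τ ℚ) * F0 := by
    intro j hj
    rcases Nat.eq_zero_or_pos k with h0 | h0
    · simp [h0]
    · rw [hF0]
      have : V ^ k = V ^ (k - 1) * V := by rw [← pow_succ]; congr 1; omega
      rw [this]
      linear_combination (k : MvPolynomial τ ℚ) * c * E * V ^ (k - 1) * hQ1 j hj
  have hder : X s * pderiv s F1 - ((b + #J * k : ℕ) : MvPolynomial τ ℚ) * F1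
      = (a + 1 : MvPolynomial τ ℚ) * F1 - (a + b + 1 : MvPolynomial τ ℚ) * (X z * F0)
        + ∑ j ∈ J, (k : MvPolynomial τ ℚ) * ((X s + X j) * (u * (c * E * V ^ (k - 1) * Q j))) := by
    have hsum : ∑ j ∈ J, (k : MvPolynomial τ ℚ) * ((X s + X j) * (u * (c * E * V ^ (k - 1) * Q j)))
        = X s * (c * (u * E)) * ((k : MvPolynomial τ ℚ) * V ^ (k - 1)) * (∑ j ∈ J, 2 * Q j)
          - (#J : MvPolynomial τ ℚ) * (k : MvPolynomial τ ℚ) * F1 := by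
      have : (#J : MvPolynomial τ ℚ) * (k : MvPolynomial τ ℚ) * F1
          = ∑ j ∈ J, (k : MvPolynomial τ ℚ) * F1 := by
        rw [Finset.sum_const, nsmul_eq_mul]; ring
      rw [this, Finset.mul_sum, ← Finset.sum_sub_distrib]
      refine Finset.sum_congr rfl fun j hj => ?_
      have := hkey j hj
      have h10 : F1 = u * F0 := by rw [hF1, hF0]; ring
      rw [h10]
      linear_combination (-u) * this
    rw [hsum, hF1, Derivation.leibniz, Derivation.leibniz, hc0, huE, Derivation.leibniz_pow, hQ2,
      hF0]
    simp only [smul_eq_mul, nsmul_eq_mul]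
    push_cast
    rw [hu]
    ring
  have hcz : coeff d (X s * pderiv s F1 - ((b + #J * k : ℕ) : MvPolynomial τ ℚ) * F1) = 0 := by
    rw [coeff_sub, coeff_euler, hd, DD_apply_mem _ _ _ _ hz s (by simp)]
    rw [← map_natCast (C : ℚ →+* MvPolynomial τ ℚ), coeff_C_mul, sub_self]
  have hterm : ∀ j ∈ J, coeff d ((k : MvPolynomial τ ℚ) *
      ((X s + X j) * (u * (c * E * V ^ (k - 1) * Q j))))
      = if j ∈ S then 0 else k * (coeff d F1 - coeff d (X z * F0)) := by
    intro j hj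
    rw [← map_natCast (C : ℚ →+* MvPolynomial τ ℚ), coeff_C_mul]
    rcases Nat.eq_zero_or_pos k with h0 | h0
    · simp [h0]
    have hk : (k : MvPolynomial τ ℚ) ≠ 0 := by exact_mod_cast h0.ne'
    have hk2 := mul_left_cancel₀ hk (hkey j hj)
    set H := c * E * V ^ (k - 1) * Q j with hH
    have hsj : s ≠ j := (hne j hj).symm
    have hzj : z ≠ j := fun h => hzJ (h ▸ hj)
    have hez : Equiv.swap s j z = z := Equiv.swap_apply_of_ne_of_ne hzs hzj
    have heI := swap_mem s j (insert s J) (by simp [hj])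
    have h10 : F1 = u * F0 := by rw [hF1, hF0]; ring
    have hco := coeff_rename_DD (Equiv.swap s j) z (insert s J) (p + 1) (b + #J * k) hez heI
    rw [← hd] at hco
    split_ifs with hjS
    · have hr : rename (Equiv.swap s j) F1 = F1 :=
        rename_FF _ _ _ _ _ _ _ hez heI (swap_mem s j (insert s S) (by simp [hjS]))
      have hanti := anti s j hsj F1 (u * H) (by rw [h10, ← hk2]; ring) hr
      have h3 := hco ((X s + X j) * (u * H))
      rw [map_mul, hanti] at h3
      simp only [map_add, rename_X, Equiv.swap_apply_left, Equiv.swap_apply_right] at h3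
      have : (X j + X s) * -(u * H) = -((X s + X j) * (u * H)) := by ring
      rw [this, coeff_neg] at h3
      have : coeff d ((X s + X j) * (u * H)) = 0 := by linarith
      rw [this, mul_zero]
    · have hr : rename (Equiv.swap s j) F0 = F0 :=
        rename_FF _ _ _ _ _ _ _ hez heI (swap_mem s j S (by simp [hjS, hsS]))
      have hanti := anti s j hsj F0 H hk2 hr
      have h3 := hco ((X s + X j) * (u * H))
      rw [map_mul, map_mul, hanti] at h3
      have h4 := hco F1
      rw [h10, map_mul, hr] at h4
      rw [hu] at h3 h4
      simp only [map_add, map_sub, rename_X, Equiv.swap_apply_left, Equiv.swap_apply_right,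
        hez] at h3 h4
      have : (X j + X s) * ((X z - X j) * -H) = -((X s + X j) * (u * H))
          + (u * F0) + (X z - X j) * F0 - C 2 * (X z * F0) := by
        rw [← hk2, hu]
        simp only [map_ofNat]
        ring
      rw [this, coeff_sub, coeff_add, coeff_add, coeff_neg, h4, coeff_C_mul, ← hu] at h3
      rw [h10]
      congr 1
      linarith
  rw [hder, coeff_add, coeff_sub, coeff_sum, Finset.sum_congr rfl hterm] at hcz
  have e1 : (a + 1 : MvPolynomial τ ℚ) = C (a + 1 : ℚ) := by simp
  have e2 : (a + b + 1 : MvPolynomial τ ℚ) = C (a + b + 1 : ℚ) := by simp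
  rw [e1, e2, coeff_C_mul, coeff_C_mul, Finset.sum_ite, Finset.sum_const_zero, zero_add,
    Finset.sum_const, nsmul_eq_mul] at hcz
  have hcard : ((#{x ∈ J | x ∉ S} : ℕ) : ℚ) = (#J : ℚ) - #S := by
    have : {x ∈ J | x ∉ S} = J \ S := by ext; simp
    rw [this, Finset.card_sdiff_of_subset hS, Nat.cast_sub (Finset.card_le_card hS)]
  rw [hcard] at hcz
  linarith

/-- The right hand side. -/
noncomputable def RR (n a b k m : ℕ) : ℚ :=
  ∏ l ∈ Finset.range n,
          (((a + b + k * l + (if n - m ≤ l then 1 else 0)).factorial *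
              (k * (l + 1)).factorial : ℚ) /
            ((a + k * l + (if n - m ≤ l then 1 else 0)).factorial *
              (b + k * l).factorial * k.factorial))

lemma RR_dyson (n b k : ℕ) : RR (n + 1) 0 b k 0 = RR n k k k 0 := by
  unfold RR
  rw [Finset.prod_range_succ']
  have h0 : ∀ N : ℕ, (N.factorial : ℚ) ≠ 0 := fun N => by exact_mod_cast N.factorial_ne_zero
  have : ((0 + b + k * 0 + if n + 1 - 0 ≤ 0 then 1 else 0).factorial * (k * (0 + 1)).factorial : ℚ) /
      ((0 + k * 0 + if n + 1 - 0 ≤ 0 then 1 else 0).factorial * (b + k * 0).factorial *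
        k.factorial) = 1 := by
    have hb := h0 b
    have hk := h0 k
    simp [hb, hk]
  rw [this, mul_one]
  refine Finset.prod_congr rfl fun l hl => ?_
  have hl := Finset.mem_range.mp hl
  rw [if_neg (by omega), if_neg (by omega)]
  have e1 : 0 + b + k * (l + 1) + 0 = b + k * (l + 1) := by ring
  have e2 : k * (l + 1 + 1) = k + k + k * l := by ring
  have e3 : 0 + k * (l + 1) + 0 = k * (l + 1) := by ring
  have e4 : k + k * l = k * (l + 1) := by ring
  simp only [e1, e2, e3, e4, add_zero]
  have h1 := h0 (b + k * (l + 1))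
  have h2 := h0 (k * (l + 1))
  have h3 := h0 k
  field_simp

lemma RR_full (n a b k : ℕ) : RR n (a + 1) b k 0 = RR n a b k n := by
  unfold RR
  refine Finset.prod_congr rfl fun l hl => ?_
  have hl := Finset.mem_range.mp hl
  rw [if_neg (by omega), if_pos (by omega)]
  have e1 : a + 1 + b + k * l + 0 = a + b + k * l + 1 := by ring
  have e2 : a + 1 + k * l + 0 = a + k * l + 1 := by ring
  rw [e1, e2]

lemma RR_step (n a b k m : ℕ) (hm : m ≤ n) :
    ((a : ℚ) + 1 + k * ((n : ℚ) - m)) * RR (n + 1) a b k (m + 1) =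
    ((a : ℚ) + b + 1 + k * ((n : ℚ) - m)) * RR (n + 1) a b k m := by
  unfold RR
  have hmem : n - m ∈ Finset.range (n + 1) := by simp
  rw [← Finset.mul_prod_erase _ _ hmem, ← Finset.mul_prod_erase _ _ hmem, ← mul_assoc, ← mul_assoc]
  congr 1
  · rw [if_pos (by omega), if_neg (by omega), Nat.factorial_succ, Nat.factorial_succ]
    have h0 : ∀ N : ℕ, (N.factorial : ℚ) ≠ 0 := fun N => by exact_mod_cast N.factorial_ne_zero
    have h1 := h0 (a + k * (n - m))
    have h2 := h0 (b + k * (n - m))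
    have h3 := h0 k
    have h4 : ((a + k * (n - m) + 1 : ℕ) : ℚ) ≠ 0 := by positivity
    have e1 : (a : ℚ) + 1 + k * ((n : ℚ) - m) = ((a + k * (n - m) + 1 : ℕ) : ℚ) := by
      push_cast [hm]; ring
    have e2 : (a : ℚ) + b + 1 + k * ((n : ℚ) - m) = ((a + b + k * (n - m) + 1 : ℕ) : ℚ) := by
      push_cast [hm]; ring
    rw [e1, e2, Nat.cast_mul, Nat.cast_mul, add_zero, add_zero]
    field_simp
  · refine Finset.prod_congr rfl fun l hl => ?_
    have hl := (Finset.mem_erase.mp hl).1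
    have : (n + 1 - (m + 1) ≤ l) ↔ (n + 1 - m ≤ l) := by omega
    simp only [this]

lemma FF_full (z : τ) (I : Finset τ) (a b k : ℕ) : FF z I I a b k = FF z I ∅ (a + 1) b k := by
  unfold FF WW
  rw [Finset.prod_empty, one_mul, ← mul_assoc, ← Finset.prod_mul_distrib]
  congr 1
  refine Finset.prod_congr rfl fun l _ => ?_
  ring

lemma coeff_of_dvd (z : τ) (d : τ →₀ ℕ) (hd : d z = 0) (P Q : MvPolynomial τ ℚ)
    (h : X z ∣ P - Q) : coeff d P = coeff d Q := by
  obtain ⟨R, hR⟩ := h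
  rw [← sub_eq_zero, ← coeff_sub, hR, coeff_X_mul']
  simp [hd]

lemma base (z s : τ) (J : Finset τ) (b k : ℕ) (hs : s ∉ J) (hz : z ∉ insert s J) :
    coeff (DD z (insert s J) 0 (b + #J * k)) (FF z (insert s J) ∅ 0 b k) =
      coeff (DD s J (#J * k) (#J * k)) (FF s J ∅ k k k) := by
  have hFV : FF s J ∅ k k k = VV (insert s J) ^ k := by
    unfold FF WW
    rw [VV_insert _ _ hs, mul_pow, Finset.prod_empty, one_mul, ← Finset.prod_pow]
    simp only [mul_pow]
  rw [hFV]
  have hdvd : X z ∣ FF z (insert s J) ∅ 0 b k -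
      monomial (∑ i ∈ insert s J, Finsupp.single i b) 1 * VV (insert s J) ^ k := by
    have hmon : (monomial (∑ i ∈ insert s J, Finsupp.single i b) 1 : MvPolynomial τ ℚ)
        = ∏ l ∈ insert s J, X l ^ b := by
      rw [monomial_sum_one]
      refine Finset.prod_congr rfl fun l _ => ?_
      rw [X_pow_eq_monomial]
    rw [hmon, ← Ideal.mem_span_singleton, ← Ideal.Quotient.eq_zero_iff_mem]
    have hXz : Ideal.Quotient.mk (Ideal.span {(X z : MvPolynomial τ ℚ)}) (X z) = 0 :=
      Ideal.Quotient.eq_zero_iff_mem.mpr (Ideal.mem_span_singleton_self _)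
    unfold FF WW
    simp only [map_sub, map_mul, map_prod, map_pow, hXz, pow_zero, one_mul, sub_zero,
      Finset.prod_empty, map_one, sub_self]
  have hd0 : DD z (insert s J) 0 (b + #J * k) z = 0 := by
    have : ∀ i ∈ insert s J, (Finsupp.single i (b + #J * k)) z = 0 := by
      intro i hi
      exact Finsupp.single_eq_of_ne (fun h => hz (h ▸ hi))
    simp only [DD, Finsupp.add_apply, Finsupp.finsetSum_apply, Finset.sum_eq_zero this]
    simp
  rw [coeff_of_dvd z _ hd0 _ _ hdvd]
  have hdd : DD z (insert s J) 0 (b + #J * k)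
      = (∑ i ∈ insert s J, Finsupp.single i b) + DD s J (#J * k) (#J * k) := by
    unfold DD
    rw [Finsupp.single_zero, zero_add, ← Finset.sum_insert
      (f := fun i => Finsupp.single i (#J * k)) hs, ← Finset.sum_add_distrib]
    simp only [Finsupp.single_add]
  rw [hdd, coeff_monomial_mul, one_mul]

lemma main (k n : ℕ) : ∀ (I : Finset τ), #I = n → ∀ (z : τ), z ∉ I → ∀ a b : ℕ, ∀ S ⊆ I,
    coeff (DD z I (n * a + #S) (b + (n - 1) * k)) (FF z I S a b k) = RR n a b k #S := by
  induction n with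
  | zero =>
    intro I hI z hz a b S hS
    rw [Finset.card_eq_zero] at hI
    subst hI
    rw [Finset.subset_empty] at hS
    subst hS
    simp [DD, FF, WW, VV, RR]
  | succ n ih =>
    intro I hI z hz a b
    -- the inner induction
    have inner : ∀ a, coeff (DD z I ((n + 1) * a) (b + n * k)) (FF z I ∅ a b k)
        = RR (n + 1) a b k 0 → ∀ S : Finset τ, S ⊆ I →
        coeff (DD z I ((n + 1) * a + #S) (b + n * k)) (FF z I S a b k) = RR (n + 1) a b k #S := by
      intro a h0 S
      induction S using Finset.induction_on with
      | empty => intro _; simpa using h0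
      | insert s S hsS ihS =>
        intro hS
        have hsI : s ∈ I := hS (by simp)
        have hSI : S ⊆ I := fun x hx => hS (by simp [hx])
        have h1 := ihS hSI
        have hIe : insert s (I.erase s) = I := Finset.insert_erase hsI
        have hJ : #(I.erase s) = n := by rw [Finset.card_erase_of_mem hsI, hI]; rfl
        have hSJ : S ⊆ I.erase s := fun x hx =>
          Finset.mem_erase.mpr ⟨fun h => hsS (h ▸ hx), hSI hx⟩
        have hrec := recursion z s (I.erase s) S a b k ((n + 1) * a + #S) (by simp)
          (by rwa [hIe]) hSJ
        rw [hIe, hJ, h1] at hrec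
        have hle : #S ≤ n := hJ ▸ Finset.card_le_card hSJ
        rw [Finset.card_insert_of_notMem hsS, ← add_assoc]
        rw [← RR_step n a b k #S hle] at hrec
        refine mul_left_cancel₀ ?_ hrec
        have : (#S : ℚ) ≤ n := by exact_mod_cast hle
        have : 0 ≤ (k : ℚ) * ((n : ℚ) - #S) := mul_nonneg (by positivity) (by linarith)
        positivity
    have outer : ∀ a, coeff (DD z I ((n + 1) * a) (b + n * k)) (FF z I ∅ a b k)
        = RR (n + 1) a b k 0 := by
      intro a
      induction a with
      | zero =>
        obtain ⟨s, hs⟩ : I.Nonempty := by rw [← Finset.card_pos]; omega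
        have hIe : insert s (I.erase s) = I := Finset.insert_erase hs
        have hJ : #(I.erase s) = n := by rw [Finset.card_erase_of_mem hs, hI]; rfl
        have hb := base z s (I.erase s) b k (by simp) (by rwa [hIe])
        rw [hIe, hJ] at hb
        rw [mul_zero, hb, RR_dyson]
        have h2 := ih (I.erase s) hJ s (by simp) k k ∅ (by simp)
        rw [Finset.card_empty, add_zero] at h2
        rw [← h2]
        congr 1
        rcases Nat.eq_zero_or_pos n with h0 | h0
        · subst h0
          rw [Finset.card_eq_zero] at hJ
          simp [DD, hJ]
        · congr 1
          obtain ⟨n', rfl⟩ : ∃ n', n = n' + 1 := ⟨n - 1, by omega⟩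
          simp; ring
      | succ a iha =>
        rw [RR_full, ← FF_full]
        have := inner a iha I subset_rfl
        rw [hI] at this
        rw [← this]
        congr 2
    intro S hS
    exact inner a (outer a) S hS

end Aomoto


/-- **Aomoto's constant term identity.** The constant term of
`A_m(x_0,…,x_n;a,b,k) = ∏_{l=1}^n (1-x_l/x_0)^(χ(l≤m)) · H(x_0,…,x_n;a,b,k)`
equals `∏_{l=0}^{n-1} (a+b+kl+χ(l≥n-m))! (k(l+1))! / ((a+kl+χ(l≥n-m))! (b+kl)! k!)`.
Clearing denominators, the constant term equals the coefficient of
`x_0^(n*a + m) ∏_{l=1}^n x_l^(b + (n-1)k)` in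
`∏_{l=1}^n (x_0 - x_l)^(χ(l≤m)) · ∏_{l=1}^n (x_0 - x_l)^a (x_l - x_0)^b
  · ∏_{1≤i≠j≤n} (x_j - x_i)^k`. -/
theorem aomoto_identity (n a b k m : ℕ) (hn : 1 ≤ n) (hm : m ≤ n) :
    MvPolynomial.coeff
      (Finsupp.equivFunOnFinite.symm
        (Fin.cons (n * a + m) (fun _ : Fin n => b + (n - 1) * k)))
      ((∏ l : Fin n,
          (if (l : ℕ) < m then
            (X (0 : Fin (n + 1)) - X l.succ : MvPolynomial (Fin (n + 1)) ℚ) else 1)) *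
        (∏ l : Fin n,
          (X (0 : Fin (n + 1)) - X l.succ : MvPolynomial (Fin (n + 1)) ℚ) ^ a *
            (X l.succ - X (0 : Fin (n + 1))) ^ b) *
        ∏ j : Fin n, ∏ i ∈ Finset.univ.erase j,
          (X j.succ - X i.succ : MvPolynomial (Fin (n + 1)) ℚ) ^ k)
      = ∏ l ∈ Finset.range n,
          (((a + b + k * l + (if n - m ≤ l then 1 else 0)).factorial *
              (k * (l + 1)).factorial : ℚ) /
            ((a + k * l + (if n - m ≤ l then 1 else 0)).factorial *
              (b + k * l).factorial * k.factorial)) := by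
  have hmain := Aomoto.main k n (Finset.univ.map (Fin.succEmb n)) (by simp) (0 : Fin (n + 1))
    (by simp) a b ((Finset.univ.filter (fun l : Fin n => (l : ℕ) < m)).map (Fin.succEmb n))
    (Finset.map_subset_map.mpr (Finset.filter_subset _ _))
  have hcard : #((Finset.univ.filter (fun l : Fin n => (l : ℕ) < m)).map (Fin.succEmb n)) = m := by
    rw [Finset.card_map, Fin.card_filter_val_lt]; omega
  rw [hcard] at hmain
  rw [← Aomoto.RR, ← hmain]
  congr 1
  · ext i
    refine Fin.cases ?_ (fun j => ?_) i
    · simp [Aomoto.DD]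
    · rw [Aomoto.DD_apply_mem _ _ _ _ (by simp) _ (by simp)]
      simp
  · unfold Aomoto.FF Aomoto.WW Aomoto.VV
    rw [← mul_assoc]
    congr 1
    · simp only [Finset.prod_map, Fin.coe_succEmb, Finset.prod_filter]
    · rw [← Finset.prod_pow, Finset.prod_map]
      refine Finset.prod_congr rfl fun j _ => ?_
      rw [← Finset.map_erase, Finset.prod_map, Finset.prod_pow]
      rfl
end

section
/- For any Laurent polynomial $L(x_0,\ldots,x_n)$ independent of $a_0,\ldots,a_n$, there exists a rational function $R(a_0,\ldots,a_n)$ in $n+1$ variables over $\mathbb{Q}$ such that for all nonnegative integers $a_0,\ldots,a_n$ at which $R$ is defined, $\mathrm{CT}_x\, L(x_0,\ldots,x_n)\prod_{0\le i\ne j\le n}(1-x_i/x_j)^{a_j} = R(a_0,\ldots,a_n)\cdot\frac{(a_0+\cdots+a_n)!}{a_0!\,a_1!\cdots a_n!}$. -/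
open MvPolynomial Finset

namespace Dyson

noncomputable def DP {N : ℕ} (a : Fin N → ℕ) : MvPolynomial (Fin N) ℚ :=
  ∏ j : Fin N, ∏ i ∈ Finset.univ.erase j, (X j - X i : MvPolynomial (Fin N) ℚ) ^ (a j)

noncomputable def zcoeff {N : ℕ} (f : MvPolynomial (Fin N) ℚ) (m : Fin N → ℤ) : ℚ :=
  ∑ p ∈ f.support, if (∀ j, (p j : ℤ) = m j) then coeff p f else 0

noncomputable def Dv {N : ℕ} (a : Fin N → ℕ) (v : Fin N → ℤ) : ℚ :=
  zcoeff (DP a) (fun j => ((N : ℤ) - 1) * a j + v j)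

lemma zcoeff_nat {N : ℕ} (f : MvPolynomial (Fin N) ℚ) (m : Fin N → ℤ) (p : Fin N →₀ ℕ)
    (h : ∀ j, (p j : ℤ) = m j) : zcoeff f m = coeff p f := by
  unfold zcoeff
  rw [Finset.sum_eq_single p]
  · rw [if_pos h]
  · intro b _ hb
    rw [if_neg]
    intro hh
    apply hb
    ext j
    have := h j
    have := hh j
    omega
  · intro hp
    rw [if_pos h]
    simpa using hp

lemma zcoeff_neg {N : ℕ} (f : MvPolynomial (Fin N) ℚ) (m : Fin N → ℤ) (j : Fin N)
    (h : m j < 0) : zcoeff f m = 0 := by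
  unfold zcoeff
  apply Finset.sum_eq_zero
  intro p _
  rw [if_neg]
  intro hh
  have := hh j
  omega

lemma DP_homog {N : ℕ} (a : Fin N → ℕ) : (DP a).IsHomogeneous ((N - 1) * ∑ j, a j) := by
  have : (DP a).IsHomogeneous (∑ j : Fin N, ∑ i ∈ Finset.univ.erase j, 1 * a j) := by
    unfold DP
    apply IsHomogeneous.prod
    intro j _
    apply IsHomogeneous.prod
    intro i _
    apply IsHomogeneous.pow
    exact (isHomogeneous_X ℚ j).sub (isHomogeneous_X ℚ i)
  convert this using 1
  rw [Finset.mul_sum]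
  apply Finset.sum_congr rfl
  intro j _
  simp [Finset.card_erase_of_mem]

lemma DP_sum {N : ℕ} (a : Fin N → ℕ) (p : Fin N →₀ ℕ) (hp : coeff p (DP a) ≠ 0) :
    ∑ j, (p j : ℤ) = ((N : ℤ) - 1) * ∑ j, (a j : ℤ) := by
  have h := DP_homog a hp
  have h2 : ∑ j, p j = (N - 1) * ∑ j, a j := by
    rw [← h, Finsupp.weight_apply, Finsupp.sum_fintype _ _ (by simp)]
    simp
  rcases N with _ | n
  · simp
  · have : ((∑ j, p j : ℕ) : ℤ) = ((n * ∑ j, a j : ℕ) : ℤ) := by rw [h2]; rfl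
    push_cast at this ⊢
    rw [this]; ring

def Low {N : ℕ} (U : Finset (Fin N)) (k : ℕ) (f : MvPolynomial (Fin N) ℚ) : Prop :=
  ∀ p, coeff p f ≠ 0 → k ≤ ∑ j ∈ U, p j

lemma Low.mul {N : ℕ} {U : Finset (Fin N)} {k l : ℕ} {f g : MvPolynomial (Fin N) ℚ}
    (hf : Low U k f) (hg : Low U l g) : Low U (k + l) (f * g) := by
  intro p hp
  rw [coeff_mul] at hp
  obtain ⟨⟨x, y⟩, hx, hne⟩ := Finset.exists_ne_zero_of_sum_ne_zero hp
  rw [Finset.HasAntidiagonal.mem_antidiagonal] at hx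
  have h1 := hf x (left_ne_zero_of_mul hne)
  have h2 := hg y (right_ne_zero_of_mul hne)
  subst hx
  simp only [Finsupp.add_apply, Finset.sum_add_distrib]
  omega

lemma Low.one {N : ℕ} {U : Finset (Fin N)} : Low U 0 (1 : MvPolynomial (Fin N) ℚ) := by
  intro p _; omega

lemma Low.pow {N : ℕ} {U : Finset (Fin N)} {k : ℕ} {f : MvPolynomial (Fin N) ℚ}
    (hf : Low U k f) (e : ℕ) : Low U (e * k) (f ^ e) := by
  induction e with
  | zero => simpa using Low.one
  | succ e ih =>
    rw [pow_succ, Nat.succ_mul]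
    exact ih.mul hf

lemma Low.prod {N : ℕ} {U : Finset (Fin N)} {ι : Type} (s : Finset ι) (k : ι → ℕ)
    (f : ι → MvPolynomial (Fin N) ℚ)
    (hf : ∀ i ∈ s, Low U (k i) (f i)) : Low U (∑ i ∈ s, k i) (∏ i ∈ s, f i) := by
  classical
  induction s using Finset.induction_on with
  | empty => simpa using Low.one
  | insert x s hx ih =>
    rw [Finset.sum_insert hx, Finset.prod_insert hx]
    exact (hf x (by simp)).mul (ih fun i hi => hf i (by simp [hi]))

lemma Low_X {N : ℕ} (U : Finset (Fin N)) (i j : Fin N) :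
    Low U (if i ∈ U ∧ j ∈ U then 1 else 0) (X j - X i : MvPolynomial (Fin N) ℚ) := by
  intro p hp
  split_ifs with h
  · rw [coeff_sub, coeff_X, coeff_X] at hp
    by_cases h1 : Finsupp.single j 1 = p
    · subst h1
      exact le_trans (by simp) (Finset.single_le_sum (f := fun x => (Finsupp.single j 1 : Fin N →₀ ℕ) x) (fun _ _ => Nat.zero_le _) h.2)
    · by_cases h2 : Finsupp.single i 1 = p
      · subst h2
        exact le_trans (by simp) (Finset.single_le_sum (f := fun x => (Finsupp.single i 1 : Fin N →₀ ℕ) x) (fun _ _ => Nat.zero_le _) h.1)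
      · simp [h1, h2] at hp
  · omega

lemma DP_low {N : ℕ} (a : Fin N → ℕ) (p : Fin N →₀ ℕ) (hp : coeff p (DP a) ≠ 0)
    (U : Finset (Fin N)) :
    ((#U : ℤ) - 1) * ∑ j ∈ U, (a j : ℤ) ≤ ∑ j ∈ U, (p j : ℤ) := by
  have h : Low U (∑ j : Fin N, ∑ i ∈ Finset.univ.erase j, a j * (if i ∈ U ∧ j ∈ U then 1 else 0))
      (DP a) := by
    unfold DP
    apply Low.prod
    intro j _
    apply Low.prod
    intro i _
    exact (Low_X U i j).pow _
  have h2 := h p hp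
  have h3 : (∑ j : Fin N, ∑ i ∈ Finset.univ.erase j, a j * (if i ∈ U ∧ j ∈ U then 1 else 0))
     = ∑ j ∈ U, a j * (#U - 1) := by
    rw [← Finset.sum_subset (Finset.subset_univ U)]
    · apply Finset.sum_congr rfl
      intro j hj
      rw [← Finset.mul_sum]
      congr 1
      simp only [hj, and_true]
      rw [Finset.sum_ite, Finset.sum_const_zero, add_zero, ← Finset.card_eq_sum_ones,
        ← Finset.card_erase_of_mem hj]
      congr 1
      ext x; simp
    · intro j _ hj
      simp [hj]
  rw [h3] at h2
  rcases U.eq_empty_or_nonempty with h0 | h0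
  · simp [h0]
  · have : 1 ≤ #U := h0.card_pos
    zify [this] at h2
    rw [← Finset.sum_mul] at h2
    linarith [mul_comm ((#U : ℤ) - 1) (∑ j ∈ U, (a j : ℤ))]

/-- combinatorial vanishing -/
lemma exists_vanish {n : ℕ} (a : Fin n → ℕ) (v : Fin n → ℤ) (p : Fin n →₀ ℕ)
    (hp : coeff p (DP a) ≠ 0) (K : ℕ) (hK : ∑ j, |v j| ≤ K) (h : ℕ) (h1 : 1 ≤ h)
    (hA : h ≤ ∑ j, a j)
    (hU : ∀ U : Finset (Fin n), ¬ (∑ j ∈ U, a j < h ∧ h ≤ ∑ j ∈ U, a j + K)) :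
    ∃ j, (0 : ℤ) ≤ a j + p j - h ∧ (a j + p j - h : ℤ) < n * a j + v j := by
  by_contra hcon
  push Not at hcon
  set U : Finset (Fin n) := Finset.univ.filter fun j => a j + p j < h with hUdef
  have hlow := DP_low a p hp U
  have hsum := DP_sum a p hp
  have hsplit : ∀ f : Fin n → ℤ, ∑ j ∈ U, f j + ∑ j ∈ Uᶜ, f j = ∑ j, f j := fun f =>
    Finset.sum_add_sum_compl U f
  have hcard : (#U : ℤ) + #(Uᶜ) = n := by
    have := Finset.card_add_card_compl U
    rw [Fintype.card_fin] at this
    exact_mod_cast this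
  have e1 : ∑ j ∈ U, ((a j : ℤ) + p j + 1) ≤ ∑ j ∈ U, (h : ℤ) := by
    apply Finset.sum_le_sum
    intro j hj
    simp [hUdef] at hj
    omega
  have e2 : ∑ j ∈ Uᶜ, ((n : ℤ) * a j + v j + h - a j) ≤ ∑ j ∈ Uᶜ, (p j : ℤ) := by
    apply Finset.sum_le_sum
    intro j hj
    simp [hUdef] at hj
    have := hcon j (by omega)
    linarith
  have e3 : - ∑ j ∈ Uᶜ, v j ≤ K := by
    refine le_trans ?_ hK
    rw [← Finset.sum_neg_distrib]
    refine le_trans (Finset.sum_le_sum fun j _ => neg_le_abs (v j)) ?_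
    exact Finset.sum_le_sum_of_subset_of_nonneg (Finset.subset_univ _) (fun j _ _ => abs_nonneg _)
  simp only [Finset.sum_add_distrib, Finset.sum_sub_distrib, Finset.sum_const, nsmul_eq_mul,
    ← Finset.mul_sum, mul_one] at e1 e2
  have s1 := hsplit (fun j => (a j : ℤ))
  have s2 := hsplit (fun j => (p j : ℤ))
  have hA' : (h : ℤ) ≤ ∑ j, (a j : ℤ) := by exact_mod_cast hA
  have hlt : ∑ j ∈ U, (a j : ℤ) < h := by
    rcases U.eq_empty_or_nonempty with h0 | h0
    · rw [h0]; simp; omega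
    · have hc : (0 : ℤ) < #U := by exact_mod_cast h0.card_pos
      have : (#U : ℤ) * (∑ j ∈ U, (a j : ℤ) + 1) ≤ #U * h := by linarith
      have := le_of_mul_le_mul_left this hc
      linarith
  apply hU U
  constructor
  · exact_mod_cast hlt
  · have hc : (1 : ℤ) ≤ #(Uᶜ) := by
      by_contra h0
      have h0' : #(Uᶜ) = 0 := by omega
      rw [Finset.card_eq_zero] at h0'
      rw [h0'] at s1
      simp at s1
      linarith
    have e4 : (#(Uᶜ) : ℤ) * (h - ∑ j ∈ U, (a j : ℤ)) ≤ K := by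
      have : (n : ℤ) * ∑ j ∈ Uᶜ, (a j : ℤ) + ∑ j ∈ Uᶜ, v j + #(Uᶜ) * h - ∑ j ∈ Uᶜ, (a j : ℤ)
        ≤ (n - 1) * (∑ j ∈ U, (a j : ℤ) + ∑ j ∈ Uᶜ, (a j : ℤ)) - (#U - 1) * ∑ j ∈ U, (a j : ℤ) := by
        rw [s1]; linarith
      rw [← hcard] at this
      linarith
    have : (h : ℤ) ≤ ∑ j ∈ U, (a j : ℤ) + K := by nlinarith
    exact_mod_cast this

end Dyson
namespace Dyson

lemma coeff_sep {n : ℕ} (w : Fin n → Polynomial ℚ) (m : Fin n →₀ ℕ) :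
    coeff m (∏ j, Polynomial.aeval (X j : MvPolynomial (Fin n) ℚ) (w j)) =
      ∏ j, (w j).coeff (m j) := by
  classical
  have h : ∀ j, Polynomial.aeval (X j : MvPolynomial (Fin n) ℚ) (w j) =
      ∑ i ∈ (w j).support, C ((w j).coeff i) * (X j : MvPolynomial (Fin n) ℚ) ^ i := by
    intro j
    rw [Polynomial.aeval_def, Polynomial.eval₂_eq_sum, Polynomial.sum_def, algebraMap_eq]
  simp_rw [h]
  rw [Finset.prod_univ_sum, coeff_sum]
  have h2 : ∀ s : Fin n → ℕ, coeff m (∏ j, (C ((w j).coeff (s j)) * (X j : MvPolynomial (Fin n) ℚ) ^ (s j)))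
      = if s = m then ∏ j, (w j).coeff (m j) else 0 := by
    intro s
    rw [Finset.prod_mul_distrib, ← map_prod, coeff_C_mul]
    have : (∏ j, (X j : MvPolynomial (Fin n) ℚ) ^ (s j)) =
        monomial (Finsupp.equivFunOnFinite.symm s) 1 := by
      rw [monomial_eq, Finsupp.prod_fintype _ _ (by simp)]
      simp
    rw [this, coeff_monomial]
    by_cases hs : s = m
    · subst hs
      simp
    · rw [if_neg hs, if_neg, mul_zero]
      intro hh
      apply hs
      rw [← hh]; rfl
  simp_rw [h2]
  rw [Finset.sum_ite_eq']
  split_ifs with hm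
  · rfl
  · simp only [Fintype.mem_piFinset, Polynomial.mem_support_iff, not_forall, not_not] at hm
    obtain ⟨j, hj⟩ := hm
    exact (Finset.prod_eq_zero (Finset.mem_univ j) hj).symm

/-- dehomogenized polynomial -/
noncomputable def uu (a k : ℕ) : Polynomial ℚ := (Polynomial.X - 1) ^ a * (1 - Polynomial.X) ^ k

noncomputable def GP {n : ℕ} (t : ℕ) (a : Fin n → ℕ) : MvPolynomial (Fin n) ℚ :=
  (∏ j, Polynomial.aeval (X j : MvPolynomial (Fin n) ℚ) (uu (a j) t)) * DP a

lemma DP_ite {N : ℕ} (a : Fin N → ℕ) : DP a =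
    ∏ j, ∏ i, if i = j then 1 else (X j - X i : MvPolynomial (Fin N) ℚ) ^ (a j) := by
  unfold DP
  apply Finset.prod_congr rfl
  intro j _
  rw [← Finset.prod_erase (s := Finset.univ) (a := j)
    (f := fun i => if i = j then 1 else (X j - X i : MvPolynomial (Fin N) ℚ) ^ (a j)) (by simp)]
  apply Finset.prod_congr rfl
  intro i hi
  rw [if_neg (by simpa using hi)]

lemma DP_cons {n : ℕ} (t : ℕ) (a : Fin n → ℕ) :
    Polynomial.eval 1 (finSuccEquiv ℚ n (DP (Fin.cons t a : Fin (n + 1) → ℕ))) = GP t a := by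
  rw [DP_ite, Fin.prod_univ_succ]
  simp_rw [Fin.prod_univ_succ]
  simp only [Fin.cons_zero, Fin.cons_succ, if_true, Fin.succ_ne_zero, if_false, one_mul,
    Fin.succ_inj, (Fin.succ_ne_zero _).symm]
  unfold GP
  rw [DP_ite]
  simp only [map_mul, map_prod, apply_ite (finSuccEquiv ℚ n), map_one, map_pow, map_sub, 
    finSuccEquiv_X_zero, finSuccEquiv_X_succ, Polynomial.eval_mul, Polynomial.eval_prod,
    apply_ite (Polynomial.eval (1 : MvPolynomial (Fin n) ℚ)),
    Polynomial.eval_pow, Polynomial.eval_sub, Polynomial.eval_X, Polynomial.eval_C, uu,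
    Polynomial.aeval_X, Finset.prod_mul_distrib, Polynomial.eval_one]
  ring

lemma coeff_cons {n : ℕ} (t : ℕ) (a : Fin n → ℕ) (m : Fin n →₀ ℕ) (i : ℕ) 
   (h : i + ∑ j, m j = n * (t + ∑ j, a j)) :
   coeff (m.cons i) (DP (Fin.cons t a : Fin (n + 1) → ℕ)) = coeff m (GP t a) := by
  rw [← DP_cons, Polynomial.eval_eq_sum_range, coeff_sum]
  simp only [one_pow, mul_one, finSuccEquiv_coeff_coeff]
  have key : ∀ b, coeff (m.cons b) (DP (Fin.cons t a : Fin (n + 1) → ℕ)) ≠ 0 → b = i := by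
    intro b hb
    have := DP_sum _ _ hb
    simp [Fin.sum_univ_succ] at this
    zify at h
    linarith
  by_cases h0 : coeff (m.cons i) (DP (Fin.cons t a : Fin (n + 1) → ℕ)) = 0
  · rw [h0, Finset.sum_eq_zero]
    intro b _
    by_contra hb
    have := key b hb
    subst this
    exact hb h0
  · rw [Finset.sum_eq_single i]
    · intro b _ hb
      by_contra hb'
      exact hb (key b hb')
    · intro hi
      rw [← finSuccEquiv_coeff_coeff, Polynomial.coeff_eq_zero_of_natDegree_lt, coeff_zero]
      simp at hi
      omega

lemma coeff_GP_zero {n : ℕ} (t : ℕ) (a : Fin n → ℕ) (m : Fin n →₀ ℕ) 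
   (h : n * (t + ∑ j, a j) < ∑ j, m j) : coeff m (GP t a) = 0 := by
  rw [← DP_cons, Polynomial.eval_eq_sum_range, coeff_sum]
  simp only [one_pow, mul_one, finSuccEquiv_coeff_coeff]
  apply Finset.sum_eq_zero
  intro b _
  by_contra hb
  have := DP_sum _ _ hb
  simp [Fin.sum_univ_succ] at this
  zify at h
  linarith

noncomputable def zpc (f : Polynomial ℚ) (e : ℤ) : ℚ := if 0 ≤ e then f.coeff e.toNat else 0

lemma GP_expand {n : ℕ} (t : ℕ) (a : Fin n → ℕ) (m : Fin n →₀ ℕ) :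
    coeff m (GP t a) = ∑ p ∈ (DP a).support, coeff p (DP a) *
      ∏ j, zpc (uu (a j) t) ((m j : ℤ) - p j) := by
  unfold GP
  conv_lhs => rw [(DP a).as_sum]
  rw [Finset.mul_sum, coeff_sum]
  apply Finset.sum_congr rfl
  intro p _
  have : (∏ j, Polynomial.aeval (X j : MvPolynomial (Fin n) ℚ) (uu (a j) t)) *
      monomial p (coeff p (DP a)) = C (coeff p (DP a)) *
       ∏ j, Polynomial.aeval (X j : MvPolynomial (Fin n) ℚ) (uu (a j) t * Polynomial.X ^ (p j)) := by
    rw [monomial_eq, Finsupp.prod_fintype _ _ (by simp)]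
    simp only [map_mul, Finset.prod_mul_distrib, map_pow, Polynomial.aeval_X]
    ring
  rw [this, coeff_C_mul, coeff_sep]
  congr 1
  apply Finset.prod_congr rfl
  intro j _
  rw [Polynomial.coeff_mul_X_pow', zpc]
  by_cases h : p j ≤ m j
  · rw [if_pos h, if_pos (by omega)]
    congr 1
    omega
  · rw [if_neg h, if_neg (by omega)]

/-- the key formula -/
lemma Dv_formula {n : ℕ} (t : ℕ) (a : Fin n → ℕ) (v : Fin (n + 1) → ℤ) (hv : ∑ j, v j = 0) :
    Dv (Fin.cons t a : Fin (n + 1) → ℕ) v = ∑ p ∈ (DP a).support, coeff p (DP a) *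
      ∏ j, zpc (uu (a j) t) ((n * a j + v j.succ : ℤ) - p j) := by
  by_cases hneg : ∃ j : Fin n, (n * a j + v j.succ : ℤ) < 0
  · obtain ⟨j, hj⟩ := hneg
    rw [Dv, zcoeff_neg _ _ j.succ (by simpa using hj)]
    symm
    apply Finset.sum_eq_zero
    intro p _
    rw [Finset.prod_eq_zero (Finset.mem_univ j), mul_zero]
    rw [zpc, if_neg (by omega)]
  push Not at hneg
  let m : Fin n →₀ ℕ := Finsupp.equivFunOnFinite.symm fun j => (n * a j + v j.succ : ℤ).toNat
  have hm : ∀ j, (m j : ℤ) = n * a j + v j.succ := by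
    intro j
    simp only [m, Finsupp.equivFunOnFinite_symm_apply_apply]
    rw [Int.toNat_of_nonneg (hneg j)]
  simp_rw [← hm]
  rw [← GP_expand]
  have hs : ∑ j, (m j : ℤ) = n * ∑ j, (a j : ℤ) - v 0 := by
    simp_rw [hm]
    rw [Fin.sum_univ_succ] at hv
    rw [Finset.sum_add_distrib, ← Finset.mul_sum]
    linarith
  by_cases h0 : (n * t + v 0 : ℤ) < 0
  · rw [Dv, zcoeff_neg _ _ 0 (by simpa using h0), coeff_GP_zero]
    zify
    rw [hs]; linarith
  · rw [← coeff_cons t a m (n * t + v 0 : ℤ).toNat, Dv]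
    · apply zcoeff_nat
      intro j
      refine Fin.cases ?_ ?_ j
      · simp; omega
      · intro j; simp [hm]
    · zify
      rw [hs, Int.toNat_of_nonneg (by omega)]; ring

lemma uu_eq (a k : ℕ) : uu a k = Polynomial.C ((-1) ^ a) * (1 - Polynomial.X) ^ (a + k) := by
  unfold uu
  rw [pow_add, ← mul_assoc]
  congr 1
  rw [map_pow, ← mul_pow]
  congr 1
  simp

lemma coeff_one_sub (N e : ℕ) : ((1 - Polynomial.X : Polynomial ℚ) ^ N).coeff e =
    (-1) ^ e * (N.choose e) := by
  have : (1 - Polynomial.X : Polynomial ℚ) ^ N = Polynomial.C ((-1) ^ N) *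
     (Polynomial.X + Polynomial.C (-1)) ^ N := by
    rw [map_pow, ← mul_pow]
    congr 1
    simp only [map_neg, map_one]; ring
  rw [this, Polynomial.coeff_C_mul, Polynomial.coeff_X_add_C_pow]
  by_cases h : e ≤ N
  · obtain ⟨d, rfl⟩ := Nat.exists_eq_add_of_le h
    rw [Nat.add_sub_cancel_left, ← mul_assoc, pow_add, mul_assoc ((-1 : ℚ) ^ e), ← mul_pow]
    simp
  · rw [Nat.choose_eq_zero_of_lt (by omega)]; simp

lemma uu_coeff (a k e : ℕ) : (uu a k).coeff e = (-1) ^ a * ((-1) ^ e * ((a + k).choose e)) := by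
  rw [uu_eq, Polynomial.coeff_C_mul, coeff_one_sub]

lemma uu_coeff' (a k e s : ℕ) (h : e + s = a + k) :
    (uu a k).coeff e = (-1) ^ k * ((-1) ^ s * ((a + k).choose s)) := by
  rw [uu_coeff, ← Nat.choose_symm_of_eq_add h.symm, ← mul_assoc, ← mul_assoc, ← pow_add, ← pow_add]
  congr 1
  apply neg_one_pow_congr
  rw [Nat.even_iff, Nat.even_iff]
  omega

/-- translation-reflection -/
lemma DP_refl {n : ℕ} (a : Fin n → ℕ) : ∃ ε : ℚ, 
    DP a = C ε * aeval (fun j => (1 - X j : MvPolynomial (Fin n) ℚ)) (DP a) := by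
  refine ⟨∏ j : Fin n, ∏ i ∈ Finset.univ.erase j, (-1) ^ (a j), ?_⟩
  unfold DP
  simp only [map_prod, map_pow, map_sub, aeval_X, ← Finset.prod_mul_distrib, ← mul_pow]
  apply Finset.prod_congr rfl
  intro j _
  apply Finset.prod_congr rfl
  intro i _
  congr 1
  simp

lemma GP_expand2 {n : ℕ} (a : Fin n → ℕ) (m : Fin n →₀ ℕ) : ∃ ε : ℚ, ∀ t,
    coeff m (GP t a) = ε * ∑ p ∈ (DP a).support, coeff p (DP a) *
      ∏ j, ((a j + t + p j).choose (m j) : ℚ) := by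
  obtain ⟨ε, hε⟩ := DP_refl a
  refine ⟨ε * (∏ j, (-1) ^ (a j)) * (∏ j, (-1) ^ (m j)), fun t => ?_⟩
  unfold GP
  conv_lhs => rw [hε, (DP a).as_sum]
  rw [map_sum, Finset.mul_sum, Finset.mul_sum, coeff_sum, Finset.mul_sum]
  apply Finset.sum_congr rfl
  intro p _
  have : (∏ j, Polynomial.aeval (X j : MvPolynomial (Fin n) ℚ) (uu (a j) t)) *
      (C ε * aeval (fun j => (1 - X j : MvPolynomial (Fin n) ℚ)) (monomial p (coeff p (DP a)))) =
       C (ε * (∏ j, (-1) ^ (a j)) * coeff p (DP a)) *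
       ∏ j, Polynomial.aeval (X j : MvPolynomial (Fin n) ℚ) ((1 - Polynomial.X : Polynomial ℚ) ^ (a j + t + p j)) := by
    rw [aeval_monomial, Finsupp.prod_fintype _ _ (by simp)]
    simp only [uu_eq, map_mul, Finset.prod_mul_distrib, map_pow, map_sub, map_one, Polynomial.aeval_X,
      pow_add, map_prod, algebraMap_eq, Polynomial.aeval_C]
    ring
  rw [this, coeff_C_mul, coeff_sep]
  simp_rw [coeff_one_sub]
  rw [Finset.prod_mul_distrib]
  ring

end Dyson
namespace Dyson

noncomputable def chp (m : ℕ) (c : ℚ) : Polynomial ℚ :=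
  Polynomial.C ((m.factorial : ℚ)⁻¹) * (descPochhammer ℚ m).comp (Polynomial.X + Polynomial.C c)

lemma chp_eval (m : ℕ) (c t : ℚ) (k : ℕ) (h : t + c = k) : (chp m c).eval t = (k.choose m : ℚ) := by
  unfold chp
  simp only [Polynomial.eval_mul, Polynomial.eval_C, Polynomial.eval_comp, Polynomial.eval_add,
    Polynomial.eval_X, h]
  rw [descPochhammer_eval_eq_descFactorial, Nat.descFactorial_eq_factorial_mul_choose]
  push_cast
  rw [inv_mul_cancel_left₀]
  exact_mod_cast m.factorial_ne_zero

lemma chp_natDegree (m : ℕ) (c : ℚ) : (chp m c).natDegree ≤ m := by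
  unfold chp
  refine (Polynomial.natDegree_C_mul_le _ _).trans ?_
  refine Polynomial.natDegree_comp_le.trans ?_
  rw [Polynomial.natDegree_X_add_C, mul_one, descPochhammer_natDegree]

noncomputable def Eexc {n : ℕ} (K : ℕ) (a : Fin n → ℕ) (t : ℚ) : ℚ :=
  ∏ U : Finset (Fin n), ∏ i ∈ Finset.range K, (t + ∑ j ∈ U, (a j : ℚ) + i + 1)

noncomputable def EexcP {n : ℕ} (K : ℕ) (a : Fin n → ℕ) : Polynomial ℚ :=
  ∏ U : Finset (Fin n), ∏ i ∈ Finset.range K,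
    (Polynomial.X + Polynomial.C (∑ j ∈ U, (a j : ℚ) + i + 1))

lemma EexcP_eval {n : ℕ} (K : ℕ) (a : Fin n → ℕ) (t : ℚ) : (EexcP K a).eval t = Eexc K a t := by
  simp only [EexcP, Eexc, Polynomial.eval_prod, Polynomial.eval_add, Polynomial.eval_X,
    Polynomial.eval_C, add_assoc]

lemma EexcP_natDegree {n : ℕ} (K : ℕ) (a : Fin n → ℕ) : (EexcP K a).natDegree ≤ 2 ^ n * K := by
  unfold EexcP
  refine (Polynomial.natDegree_prod_le _ _).trans ?_
  refine (Finset.sum_le_sum (g := fun _ => K) fun U _ => ?_).trans ?_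
  · refine (Polynomial.natDegree_prod_le _ _).trans ?_
    simp [-map_add, -map_sum]
  · simp

lemma poly_ext_nat (f g : Polynomial ℚ) (h : ∀ t : ℕ, f.eval (t : ℚ) = g.eval (t : ℚ)) : f = g := by
  apply Polynomial.eq_of_infinite_eval_eq
  refine Set.Infinite.mono (s := Set.range fun t : ℕ => (t : ℚ)) ?_ ?_
  · rintro _ ⟨t, rfl⟩
    exact h t
  · exact Set.infinite_range_of_injective Nat.cast_injective

lemma key {n : ℕ} (v : Fin (n + 1) → ℤ) (hv : ∑ j, v j = 0) (K : ℕ)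
    (hK : ∑ j : Fin n, |v j.succ| ≤ K) (a : Fin n → ℕ) :
    ∃ Q : Polynomial ℚ, Q.natDegree ≤ (v 0).natAbs + 2 ^ n * K ∧
      ∀ t : ℕ, Dv (Fin.cons t a : Fin (n + 1) → ℕ) v * Eexc K a t =
        Q.eval (t : ℚ) * ∏ h ∈ Finset.range (∑ j, a j), ((t : ℚ) + h + 1) := by
  by_cases hneg : ∃ j : Fin n, (n * a j + v j.succ : ℤ) < 0
  · obtain ⟨j, hj⟩ := hneg
    refine ⟨0, by simp, fun t => ?_⟩
    rw [Dv, zcoeff_neg _ _ j.succ (by simpa using hj)]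
    simp
  push Not at hneg
  let m : Fin n →₀ ℕ := Finsupp.equivFunOnFinite.symm fun j => (n * a j + v j.succ : ℤ).toNat
  have hm : ∀ j, (m j : ℤ) = n * a j + v j.succ := by
    intro j
    simp only [m, Finsupp.equivFunOnFinite_symm_apply_apply]
    rw [Int.toNat_of_nonneg (hneg j)]
  have hF : ∀ t : ℕ, Dv (Fin.cons t a : Fin (n + 1) → ℕ) v = coeff m (GP t a) := by
    intro t
    rw [Dv_formula t a v hv, GP_expand]
    simp_rw [hm]
  have hs : ∑ j, (m j : ℤ) = n * ∑ j, (a j : ℤ) - v 0 := by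
    simp_rw [hm]
    rw [Fin.sum_univ_succ] at hv
    rw [Finset.sum_add_distrib, ← Finset.mul_sum]
    linarith
  -- first expression
  obtain ⟨ε, hε⟩ := GP_expand2 a m
  let f1 : Polynomial ℚ := Polynomial.C ε * ∑ p ∈ (DP a).support, Polynomial.C (coeff p (DP a)) *
      ∏ j, chp (m j) (a j + p j)
  have hf1 : ∀ t : ℕ, f1.eval (t : ℚ) = coeff m (GP t a) := by
    intro t
    rw [hε]
    simp only [f1, Polynomial.eval_mul, Polynomial.eval_C, Polynomial.eval_finsetSum,
      Polynomial.eval_prod]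
    congr 1
    apply Finset.sum_congr rfl
    intro p _
    congr 1
    apply Finset.prod_congr rfl
    intro j _
    apply chp_eval
    push_cast; ring
  -- second expression
  let f2 : Polynomial ℚ := ∑ p ∈ (DP a).support, Polynomial.C (coeff p (DP a)) *
      ∏ j, if p j ≤ m j then Polynomial.C ((-1) ^ (a j) * (-1) ^ (m j - p j)) * chp (m j - p j) (a j)
        else 0
  have hf2 : ∀ t : ℕ, f2.eval (t : ℚ) = coeff m (GP t a) := by
    intro t
    rw [GP_expand]
    simp only [f2, Polynomial.eval_mul, Polynomial.eval_C, Polynomial.eval_finsetSum,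
      Polynomial.eval_prod]
    apply Finset.sum_congr rfl
    intro p _
    congr 1
    apply Finset.prod_congr rfl
    intro j _
    unfold zpc
    by_cases h : p j ≤ m j
    · rw [if_pos h, if_pos (by omega), uu_coeff, Polynomial.eval_mul, Polynomial.eval_C,
        chp_eval _ _ _ (a j + t) (by push_cast; ring), mul_assoc,
        show ((m j : ℤ) - p j).toNat = m j - p j by omega]
    · rw [if_neg h, if_neg (by omega), Polynomial.eval_zero]
  have h12 : f1 = f2 := poly_ext_nat _ _ fun t => by rw [hf1, hf2]
  have hdeg : f2.natDegree ≤ ∑ j, a j + (v 0).natAbs := by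
    apply Polynomial.natDegree_sum_le_of_forall_le
    intro p hp
    refine (Polynomial.natDegree_C_mul_le _ _).trans ?_
    by_cases hle : ∀ j, p j ≤ m j
    · refine (Polynomial.natDegree_prod_le _ _).trans ?_
      refine (Finset.sum_le_sum (g := fun j => m j - p j) fun j _ => ?_).trans ?_
      · rw [if_pos (hle j)]
        exact (Polynomial.natDegree_C_mul_le _ _).trans (chp_natDegree _ _)
      · have hps := DP_sum a p (by simpa using hp)
        zify [hle]
        rw [Finset.sum_sub_distrib, hs, hps]
        have := neg_le_abs (v 0)
        linarith
    · push Not at hle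
      obtain ⟨j, hj⟩ := hle
      rw [Finset.prod_eq_zero (Finset.mem_univ j) (by rw [if_neg (by omega)])]
      simp
  have hdvd : (∏ h ∈ Finset.range (∑ j, a j), (Polynomial.X - Polynomial.C (-(h : ℚ) - 1))) ∣
      f1 * EexcP K a := by
    apply Finset.prod_dvd_of_coprime
    · intro x _ y _ hxy
      apply Polynomial.isCoprime_X_sub_C_of_isUnit_sub
      apply IsUnit.mk0
      intro h0
      apply hxy
      have : (x : ℚ) = y := by linarith
      exact_mod_cast this
    · intro h hh
      rw [Finset.mem_range] at hh
      rw [Polynomial.dvd_iff_isRoot, Polynomial.IsRoot, Polynomial.eval_mul, EexcP_eval]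
      by_cases hU : ∀ U : Finset (Fin n), ¬ (∑ j ∈ U, a j < h + 1 ∧ h + 1 ≤ ∑ j ∈ U, a j + K)
      · rw [mul_eq_zero]; left
        simp only [f1, Polynomial.eval_mul, Polynomial.eval_C, Polynomial.eval_finsetSum,
          Polynomial.eval_prod]
        rw [Finset.sum_eq_zero, mul_zero]
        intro p hp
        obtain ⟨j, hj1, hj2⟩ := exists_vanish a (fun j => v j.succ) p (by simpa using hp) K hK
          (h + 1) (by omega) (by omega) hU
        rw [Finset.prod_eq_zero (Finset.mem_univ j), mul_zero]
        rw [← hm] at hj2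
        rw [chp_eval _ _ _ (a j + p j - (h + 1)), Nat.choose_eq_zero_of_lt]
        · simp
        · zify at hj1 hj2 ⊢; omega
        · rw [Nat.cast_sub (by omega)]; push_cast; ring
      · push Not at hU
        obtain ⟨U, h1, h2⟩ := hU
        rw [mul_eq_zero]; right
        unfold Eexc
        apply Finset.prod_eq_zero (Finset.mem_univ U)
        apply Finset.prod_eq_zero (i := h - ∑ j ∈ U, a j)
        · rw [Finset.mem_range]; omega
        · rw [Nat.cast_sub (by omega)]; push_cast; ring
  obtain ⟨Q, hQ⟩ := hdvd
  have hmonic : (∏ h ∈ Finset.range (∑ j, a j),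
      (Polynomial.X - Polynomial.C (-(h : ℚ) - 1))).Monic :=
    Polynomial.monic_prod_of_monic _ _ fun h _ => Polynomial.monic_X_sub_C _
  refine ⟨Q, ?_, fun t => ?_⟩
  · by_cases hQ0 : Q = 0
    · simp [hQ0]
    have e1 := congrArg Polynomial.natDegree hQ
    rw [hmonic.natDegree_mul' hQ0, Polynomial.natDegree_prod_of_monic _ _
      (fun h _ => Polynomial.monic_X_sub_C _)] at e1
    simp only [Polynomial.natDegree_X_sub_C, Finset.sum_const, Finset.card_range, smul_eq_mul,
      mul_one] at e1
    have e2 := Polynomial.natDegree_mul_le (p := f1) (q := EexcP K a)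
    have e3 := EexcP_natDegree K a
    rw [h12] at e1 e2
    omega
  · have := congrArg (Polynomial.eval (t : ℚ)) hQ
    rw [Polynomial.eval_mul, hf1, EexcP_eval, Polynomial.eval_mul, Polynomial.eval_prod] at this
    rw [hF, this, mul_comm]
    congr 1
    apply Finset.prod_congr rfl
    intro h _
    simp; ring

/-- slices with fixed first parameter -/
lemma slice {n : ℕ} (v : Fin (n + 1) → ℤ) (hv : ∑ j, v j = 0) (k : ℕ) (a : Fin n → ℕ) :
    Dv (Fin.cons k a : Fin (n + 1) → ℕ) v =
      ∑ s ∈ Fintype.piFinset (fun _ : Fin n => Finset.range (n * k + (v 0).natAbs + 1)),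
        (∏ j, ((-1) ^ k * ((-1) ^ (s j) * ((a j + k).choose (s j) : ℚ)))) *
          Dv a (fun j => v j.succ - k + s j) := by
  rw [Dv_formula k a v hv]
  simp only [Dv, zcoeff]
  simp_rw [Finset.mul_sum]
  rw [Finset.sum_comm]
  apply Finset.sum_congr rfl
  intro p hp
  have hps := DP_sum a p (by simpa using hp)
  by_cases hnn : ∀ j, (0 : ℤ) ≤ p j - ((n - 1) * a j + v j.succ - k)
  · let s0 : Fin n → ℕ := fun j => (p j - ((n - 1) * a j + v j.succ - k) : ℤ).toNat
    have hs0 : ∀ j, (s0 j : ℤ) = p j - ((n - 1) * a j + v j.succ - k) := fun j =>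
      Int.toNat_of_nonneg (hnn j)
    have hsum : ∑ j, (s0 j : ℤ) = n * k + v 0 := by
      simp_rw [hs0]
      rw [Fin.sum_univ_succ] at hv
      simp only [Finset.sum_sub_distrib, Finset.sum_add_distrib, ← Finset.mul_sum, hps]
      simp
      linarith
    rw [Finset.sum_eq_single s0]
    · rw [if_pos, mul_comm]
      · congr 1
        apply Finset.prod_congr rfl
        intro j _
        have := hs0 j
        unfold zpc
        split_ifs with h
        · apply uu_coeff'
          zify
          rw [Int.toNat_of_nonneg h, this]
          ring
        · rw [Nat.choose_eq_zero_of_lt]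
          · simp
          · zify
            rw [this]
            linarith
      · intro j
        rw [hs0]; ring
    · intro s _ hs
      rw [if_neg, mul_zero]
      intro hh
      apply hs
      ext j
      zify
      rw [hs0, hh j]; ring
    · intro hs
      exfalso
      apply hs
      rw [Fintype.mem_piFinset]
      intro j
      rw [Finset.mem_range]
      have h1 : (s0 j : ℤ) ≤ ∑ j, (s0 j : ℤ) :=
        Finset.single_le_sum (f := fun j => (s0 j : ℤ)) (fun _ _ => by positivity) (Finset.mem_univ j)
      have := le_abs_self (v 0)
      zify
      linarith
  · push Not at hnn
    obtain ⟨j, hj⟩ := hnn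
    rw [Finset.prod_eq_zero (Finset.mem_univ j), mul_zero]
    · symm
      apply Finset.sum_eq_zero
      intro s _
      rw [if_neg, mul_zero]
      intro hh
      have := hh j
      have h2 : (0 : ℤ) ≤ s j := by positivity
      linarith
    · unfold zpc
      split_ifs with h
      · rw [uu_coeff, Nat.choose_eq_zero_of_lt]
        · simp
        · zify
          rw [Int.toNat_of_nonneg h]
          linarith
      · rfl

end Dyson
namespace Dyson

/-- generically a rational function -/
def IsRat {N : ℕ} (f : (Fin N → ℕ) → ℚ) : Prop :=
  ∃ p q : MvPolynomial (Fin N) ℚ, q ≠ 0 ∧ ∀ a : Fin N → ℕ,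
    MvPolynomial.eval (fun i => (a i : ℚ)) q ≠ 0 →
    f a = MvPolynomial.eval (fun i => (a i : ℚ)) p / MvPolynomial.eval (fun i => (a i : ℚ)) q

lemma IsRat.poly {N : ℕ} (p : MvPolynomial (Fin N) ℚ) :
    IsRat (fun a => MvPolynomial.eval (fun i => (a i : ℚ)) p) :=
  ⟨p, 1, one_ne_zero, fun a _ => by simp⟩

lemma IsRat.const {N : ℕ} (c : ℚ) : IsRat (fun _ : Fin N → ℕ => c) := by
  simpa using IsRat.poly (N := N) (C c)

lemma IsRat.mul {N : ℕ} {f g : (Fin N → ℕ) → ℚ} (hf : IsRat f) (hg : IsRat g) :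
    IsRat (fun a => f a * g a) := by
  obtain ⟨p, q, hq, h⟩ := hf
  obtain ⟨p', q', hq', h'⟩ := hg
  refine ⟨p * p', q * q', mul_ne_zero hq hq', fun a ha => ?_⟩
  rw [map_mul] at ha
  beta_reduce
  rw [h a (left_ne_zero_of_mul ha), h' a (right_ne_zero_of_mul ha), map_mul, map_mul,
    div_mul_div_comm]

lemma IsRat.add {N : ℕ} {f g : (Fin N → ℕ) → ℚ} (hf : IsRat f) (hg : IsRat g) :
    IsRat (fun a => f a + g a) := by
  obtain ⟨p, q, hq, h⟩ := hf
  obtain ⟨p', q', hq', h'⟩ := hg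
  refine ⟨p * q' + q * p', q * q', mul_ne_zero hq hq', fun a ha => ?_⟩
  rw [map_mul] at ha
  beta_reduce
  rw [h a (left_ne_zero_of_mul ha), h' a (right_ne_zero_of_mul ha), map_mul, map_add, map_mul,
    map_mul, div_add_div _ _ (left_ne_zero_of_mul ha) (right_ne_zero_of_mul ha)]

lemma IsRat.sum {N : ℕ} {ι : Type} (s : Finset ι) (f : ι → (Fin N → ℕ) → ℚ)
    (hf : ∀ i ∈ s, IsRat (f i)) : IsRat (fun a => ∑ i ∈ s, f i a) := by
  classical
  induction s using Finset.induction_on with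
  | empty => simpa using IsRat.const (N := N) 0
  | insert x s hx ih =>
    simp_rw [Finset.sum_insert hx]
    exact (hf x (by simp)).add (ih fun i hi => hf i (by simp [hi]))

lemma IsRat.prod {N : ℕ} {ι : Type} (s : Finset ι) (f : ι → (Fin N → ℕ) → ℚ)
    (hf : ∀ i ∈ s, IsRat (f i)) : IsRat (fun a => ∏ i ∈ s, f i a) := by
  classical
  induction s using Finset.induction_on with
  | empty => simpa using IsRat.const (N := N) 1
  | insert x s hx ih =>
    simp_rw [Finset.prod_insert hx]
    exact (hf x (by simp)).mul (ih fun i hi => hf i (by simp [hi]))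

lemma IsRat.inv_poly {N : ℕ} (p : MvPolynomial (Fin N) ℚ) (hp : p ≠ 0) :
    IsRat (fun a => (MvPolynomial.eval (fun i => (a i : ℚ)) p)⁻¹) :=
  ⟨1, p, hp, fun a _ => by simp⟩

lemma IsRat.congr {N : ℕ} {f g : (Fin N → ℕ) → ℚ} (hf : IsRat f) (r : MvPolynomial (Fin N) ℚ)
    (hr : r ≠ 0) (h : ∀ a : Fin N → ℕ, MvPolynomial.eval (fun i => (a i : ℚ)) r ≠ 0 → g a = f a) :
    IsRat g := by
  obtain ⟨p, q, hq, h'⟩ := hf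
  refine ⟨p * r, q * r, mul_ne_zero hq hr, fun a ha => ?_⟩
  rw [map_mul] at ha
  beta_reduce
  rw [h a (right_ne_zero_of_mul ha), h' a (left_ne_zero_of_mul ha), map_mul, map_mul,
    mul_div_mul_right _ _ (right_ne_zero_of_mul ha)]

lemma IsRat.tail {n : ℕ} {f : (Fin n → ℕ) → ℚ} (hf : IsRat f) :
    IsRat (fun a : Fin (n + 1) → ℕ => f (fun j => a j.succ)) := by
  obtain ⟨p, q, hq, h⟩ := hf
  refine ⟨rename Fin.succ p, rename Fin.succ q, ?_, fun a ha => ?_⟩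
  · intro h0
    exact hq ((rename_injective _ (Fin.succ_injective n)) (by rw [h0, map_zero]))
  · rw [eval_rename] at ha ⊢
    rw [eval_rename]
    exact h _ ha

lemma IsRat.coord {N : ℕ} (i : Fin N) : IsRat (fun a => (a i : ℚ)) := by
  simpa using IsRat.poly (N := N) (X i)

lemma IsRat.uni {N : ℕ} (i : Fin N) (b : Polynomial ℚ) : IsRat (fun a => b.eval (a i : ℚ)) := by
  convert IsRat.poly (N := N) (Polynomial.aeval (X i) b) using 2 with a
  rw [← MvPolynomial.coe_aeval_eq_eval, RingHom.coe_coe, ← Polynomial.aeval_algHom_apply]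
  simp [Polynomial.aeval_def, Polynomial.eval₂_eq_eval_map]

lemma ne_zero_of_eval {N : ℕ} (p : MvPolynomial (Fin N) ℚ) (x : Fin N → ℚ) 
    (h : MvPolynomial.eval x p ≠ 0) : p ≠ 0 := by
  rintro rfl; simp at h

lemma IsRat.linv {N : ℕ} (U : Finset (Fin N)) (c : ℕ) :
    IsRat (fun a => (∑ i ∈ U, (a i : ℚ) + c + 1)⁻¹) := by
  have := IsRat.inv_poly (N := N) (∑ i ∈ U, X i + C (c : ℚ) + 1) 
    (ne_zero_of_eval _ 0 (by simp; positivity))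
  simpa using this

end Dyson
namespace Dyson

lemma prod_fact (t A : ℕ) : (∏ h ∈ Finset.range A, ((t : ℚ) + h + 1)) * (t.factorial : ℚ) =
    ((t + A).factorial : ℚ) := by
  induction A with
  | zero => simp
  | succ A ih =>
    rw [Finset.prod_range_succ, ← add_assoc, Nat.factorial_succ]
    push_cast
    rw [← ih]; ring

lemma Eexc_pos {n : ℕ} (K : ℕ) (a : Fin n → ℕ) (t : ℕ) : 0 < Eexc K a t := by
  unfold Eexc
  apply Finset.prod_pos
  intro U _
  apply Finset.prod_pos
  intro i _
  positivity

lemma Eexc_const_rat {n : ℕ} (K k : ℕ) : IsRat (fun a : Fin n → ℕ => Eexc K a k) := by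
  unfold Eexc
  refine IsRat.prod _ _ fun U _ => IsRat.prod _ _ fun i _ => ?_
  exact (((IsRat.const _).add (IsRat.sum _ _ fun j _ => IsRat.coord j)).add (IsRat.const _)).add
    (IsRat.const _)

lemma Eexc_inv_rat {n : ℕ} (K : ℕ) :
    IsRat (fun a : Fin (n + 1) → ℕ => (Eexc K (fun j => a j.succ) (a 0 : ℚ))⁻¹) := by
  unfold Eexc
  simp_rw [← Finset.prod_inv_distrib]
  refine IsRat.prod _ _ fun U _ => IsRat.prod _ _ fun i _ => ?_
  have := IsRat.linv (N := n + 1) (insert 0 (U.map (Fin.succEmb n))) i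
  simpa [Finset.sum_insert, Fin.succ_ne_zero] using this

lemma slice_rat {n : ℕ} 
    (ih : ∀ v : Fin n → ℤ, IsRat (fun a : Fin n → ℕ =>
      Dv a v * ((∏ i, ((a i).factorial : ℚ)) / ((∑ i, a i).factorial : ℚ))))
    (v : Fin (n + 1) → ℤ) (hv : ∑ j, v j = 0) (k : ℕ) :
    IsRat (fun a : Fin n → ℕ => Dv (Fin.cons k a : Fin (n + 1) → ℕ) v *
      ((∏ i, ((a i).factorial : ℚ)) / ((∑ i, a i).factorial : ℚ))) := by
  simp_rw [slice v hv k, Finset.sum_mul, mul_assoc]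
  refine IsRat.sum _ _ fun s _ => IsRat.mul ?_ (ih _)
  refine IsRat.prod _ _ fun j _ => (IsRat.const _).mul ((IsRat.const _).mul ?_)
  have := IsRat.uni j (chp (s j) k)
  convert this using 2 with a
  rw [chp_eval _ _ _ (a j + k) (by push_cast; ring)]

lemma main (N : ℕ) : ∀ v : Fin N → ℤ, IsRat (fun a : Fin N → ℕ =>
      Dv a v * ((∏ i, ((a i).factorial : ℚ)) / ((∑ i, a i).factorial : ℚ))) := by
  induction N with
  | zero =>
    intro v
    have : (fun a : Fin 0 → ℕ => Dv a v * ((∏ i, ((a i).factorial : ℚ)) / ((∑ i, a i).factorial : ℚ)))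
       = fun _ => Dv ![] v := by
      ext a
      rw [Subsingleton.elim a ![]]; simp
    rw [this]
    exact IsRat.const _
  | succ n ih =>
    intro v
    by_cases hv : ∑ j, v j = 0
    swap
    · convert IsRat.const (N := n + 1) 0 using 2 with a
      rw [mul_eq_zero]; left
      unfold Dv zcoeff
      apply Finset.sum_eq_zero
      intro p hp
      rw [if_neg]
      intro hh
      have := DP_sum a p (by simpa using hp)
      simp_rw [hh] at this
      rw [Finset.sum_add_distrib, ← Finset.mul_sum] at this
      apply hv
      linarith
    obtain ⟨K, hK⟩ : ∃ K : ℕ, ∑ j : Fin n, |v j.succ| ≤ K :=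
      ⟨(∑ j : Fin n, |v j.succ|).toNat, Int.self_le_toNat _⟩
    set M := (v 0).natAbs + 2 ^ n * K with hM
    let L : ℕ → Polynomial ℚ := fun k => Lagrange.basis (Finset.range (M + 1)) (fun i : ℕ => (i : ℚ)) k
    have hrat : IsRat (fun a : Fin (n + 1) → ℕ => ∑ k ∈ Finset.range (M + 1),
        (L k).eval (a 0 : ℚ) * ((Dv (Fin.cons k (fun j : Fin n => a j.succ) : Fin (n + 1) → ℕ) v *
          ((∏ i : Fin n, ((a i.succ).factorial : ℚ)) / ((∑ i : Fin n, a i.succ).factorial : ℚ))) *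
          (Eexc K (fun j => a j.succ) k * ((k.factorial : ℚ) *
          ((∏ i ∈ Finset.range k, (∑ j : Fin n, (a j.succ : ℚ) + i + 1)⁻¹) *
            (Eexc K (fun j => a j.succ) (a 0 : ℚ))⁻¹))))) := by
      refine IsRat.sum _ _ fun k _ => (IsRat.uni 0 _).mul ?_
      refine (slice_rat ih v hv k).tail.mul ?_
      refine (Eexc_const_rat K k).tail.mul ((IsRat.const _).mul (IsRat.mul ?_ (Eexc_inv_rat K)))
      exact (IsRat.prod _ _ fun i _ => IsRat.linv Finset.univ i).tail
    refine hrat.congr 1 one_ne_zero fun a _ => ?_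
    obtain ⟨t, b, rfl⟩ : ∃ (t : ℕ) (b : Fin n → ℕ), a = Fin.cons t b :=
      ⟨a 0, fun j => a j.succ, by ext j; refine Fin.cases ?_ ?_ j <;> simp⟩
    simp only [Fin.cons_zero, Fin.cons_succ, Fin.prod_univ_succ, Fin.sum_univ_succ]
    obtain ⟨Q, hQd, hQ⟩ := key v hv K hK b
    have hint : Q = ∑ k ∈ Finset.range (M + 1), Polynomial.C (Q.eval (k : ℚ)) * L k := by
      have := Lagrange.eq_interpolate (s := Finset.range (M + 1)) (v := fun i : ℕ => (i : ℚ)) (f := Q)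
        (fun x _ y _ h => Nat.cast_injective (R := ℚ) h) (by
          rw [Finset.card_range]
          refine lt_of_le_of_lt Polynomial.degree_le_natDegree ?_
          exact_mod_cast Nat.lt_succ_of_le hQd)
      rw [Lagrange.interpolate_apply] at this
      exact this
    set A := ∑ i, b i with hA
    have hpA : ∀ t : ℕ, ∏ h ∈ Finset.range A, ((t : ℚ) + h + 1) =
        ((t + A).factorial : ℚ) / (t.factorial : ℚ) := by
      intro t
      rw [eq_div_iff (by positivity), prod_fact]
    have hpk : ∀ k : ℕ, (∏ i ∈ Finset.range k, (∑ j : Fin n, (b j : ℚ) + i + 1)⁻¹) =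
        (A.factorial : ℚ) / ((k + A).factorial : ℚ) := by
      intro k
      have := prod_fact A k
      rw [Finset.prod_inv_distrib, add_comm k A, ← this, hA]
      push_cast
      rw [div_mul_cancel_right₀ (by positivity)]
    have hD : ∀ t : ℕ, Dv (Fin.cons t b : Fin (n + 1) → ℕ) v =
        Q.eval (t : ℚ) * (((t + A).factorial : ℚ) / (t.factorial : ℚ)) / Eexc K b t := by
      intro t
      rw [eq_div_iff (Eexc_pos K b t).ne', hQ, hpA]
    have hQt : Q.eval (t : ℚ) = ∑ k ∈ Finset.range (M + 1), Q.eval (k : ℚ) * (L k).eval (t : ℚ) := by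
      conv_lhs => rw [hint]
      simp [Polynomial.eval_finsetSum]
    rw [hD t, hQt, Finset.sum_mul, Finset.sum_div, Finset.sum_mul]
    apply Finset.sum_congr rfl
    intro k _
    rw [hpk, hD k]
    have h1 := (Eexc_pos K b t).ne'
    have h2 := (Eexc_pos K b k).ne'
    have h3 : ((t + A).factorial : ℚ) ≠ 0 := by positivity
    have h4 : ((k + A).factorial : ℚ) ≠ 0 := by positivity
    have h5 : (t.factorial : ℚ) ≠ 0 := by positivity
    have h6 : (k.factorial : ℚ) ≠ 0 := by positivity
    have h7 : (A.factorial : ℚ) ≠ 0 := by positivity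
    field_simp

end Dyson

theorem dyson_rationality (n : ℕ) (P : MvPolynomial (Fin (n + 1)) ℚ)
    (c : Fin (n + 1) → ℕ) :
    ∃ p q : MvPolynomial (Fin (n + 1)) ℚ, q ≠ 0 ∧
      ∀ a : Fin (n + 1) → ℕ,
        MvPolynomial.eval (fun i => (a i : ℚ)) q ≠ 0 →
        MvPolynomial.coeff (Finsupp.equivFunOnFinite.symm fun j => n * a j + c j)
          (P * ∏ j : Fin (n + 1), ∏ i ∈ Finset.univ.erase j,
            (X j - X i : MvPolynomial (Fin (n + 1)) ℚ) ^ (a j))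
        = (MvPolynomial.eval (fun i => (a i : ℚ)) p /
            MvPolynomial.eval (fun i => (a i : ℚ)) q) *
          (((∑ i, a i).factorial : ℚ) / ∏ i, ((a i).factorial : ℚ)) := by
  have hrat : Dyson.IsRat (fun a : Fin (n + 1) → ℕ => ∑ b ∈ P.support, coeff b P *
      (Dyson.Dv a (fun j => (c j : ℤ) - b j) *
        ((∏ i, ((a i).factorial : ℚ)) / ((∑ i, a i).factorial : ℚ)))) :=
    Dyson.IsRat.sum _ _ fun b _ => (Dyson.IsRat.const _).mul (Dyson.main _ _)
  obtain ⟨p, q, hq, h⟩ := hrat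
  refine ⟨p, q, hq, fun a ha => ?_⟩
  rw [← h a ha, Finset.sum_mul]
  change coeff _ (P * Dyson.DP a) = _
  conv_lhs => rw [P.as_sum]
  rw [Finset.sum_mul, coeff_sum]
  apply Finset.sum_congr rfl
  intro b _
  have h1 : ((∑ i, a i).factorial : ℚ) ≠ 0 := by positivity
  have h2 : (∏ i, ((a i).factorial : ℚ)) ≠ 0 := by positivity
  have e : coeff b P * (Dyson.Dv a (fun j => (c j : ℤ) - b j) *
        ((∏ i, ((a i).factorial : ℚ)) / ((∑ i, a i).factorial : ℚ))) *
        (((∑ i, a i).factorial : ℚ) / ∏ i, ((a i).factorial : ℚ)) =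
      coeff b P * Dyson.Dv a (fun j => (c j : ℤ) - b j) := by
    field_simp
  rw [e, coeff_monomial_mul']
  split_ifs with hb
  · congr 1
    symm
    apply Dyson.zcoeff_nat
    intro j
    have := hb j
    rw [Finsupp.tsub_apply, Nat.cast_sub this]
    simp
    ring
  · have : ∃ j, n * a j + c j < b j := by
      by_contra hcon
      push Not at hcon
      exact hb fun j => hcon j
    obtain ⟨j, hj⟩ := this
    rw [Dyson.Dv, Dyson.zcoeff_neg _ _ j, mul_zero]
    zify at hj
    push_cast
    linarith
end

section
/- For nonnegative integers $b, k$ and $n\ge 1$, the constant term $\mathrm{CT}_x\,(x_1+\cdots+x_n)^{nb}\prod_{l=1}^n x_l^{-b}\prod_{1\le i\ne j\le n}(1-x_i/x_j)^{k}$ equals $(nb)!\prod_{l=0}^{n-1}\frac{(k(l+1))!}{(b+kl)!\,k!}$. -/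
open MvPolynomial Finset

/-- `Q` is homogeneous of degree `m` and is the top-degree part of `P`. -/
def TopPart {n : ℕ} (m : ℕ) (P Q : MvPolynomial (Fin n) ℚ) : Prop :=
  Q.IsHomogeneous m ∧ ∀ e : Fin n →₀ ℕ, m ≤ e.degree → coeff e P = coeff e Q

lemma TopPart.mul {n m₁ m₂ : ℕ} {P₁ Q₁ P₂ Q₂ : MvPolynomial (Fin n) ℚ}
    (h₁ : TopPart m₁ P₁ Q₁) (h₂ : TopPart m₂ P₂ Q₂) :
    TopPart (m₁ + m₂) (P₁ * P₂) (Q₁ * Q₂) := by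
  refine ⟨h₁.1.mul h₂.1, fun e he => ?_⟩
  rw [coeff_mul, coeff_mul]
  refine Finset.sum_congr rfl fun x hx => ?_
  have hx' : x.1 + x.2 = e := by simpa using hx
  have hd : x.1.degree + x.2.degree = e.degree := by rw [← hx', map_add]
  by_cases h1 : m₁ ≤ x.1.degree
  · by_cases h2 : m₂ ≤ x.2.degree
    · rw [h₁.2 _ h1, h₂.2 _ h2]
    · have : coeff x.1 Q₁ = 0 := h₁.1.coeff_eq_zero (by omega)
      rw [h₁.2 _ h1, this]; simp
  · have : coeff x.2 Q₂ = 0 := h₂.1.coeff_eq_zero (by omega)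
    rw [h₂.2 _ (by omega), this]; simp

lemma TopPart.prod {n : ℕ} {ι : Type*} (s : Finset ι) (m : ι → ℕ)
    (P Q : ι → MvPolynomial (Fin n) ℚ) (h : ∀ i ∈ s, TopPart (m i) (P i) (Q i)) :
    TopPart (∑ i ∈ s, m i) (∏ i ∈ s, P i) (∏ i ∈ s, Q i) := by
  classical
  induction s using Finset.induction_on with
  | empty => exact ⟨by simpa using isHomogeneous_one _ _, by simp⟩
  | insert a s ha ih =>
    rw [Finset.sum_insert ha, Finset.prod_insert ha, Finset.prod_insert ha]
    exact (h a (by simp)).mul (ih fun i hi => h i (by simp [hi]))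

lemma TopPart.sub_C {n : ℕ} {Q : MvPolynomial (Fin n) ℚ} (h : Q.IsHomogeneous 1) (c : ℚ) :
    TopPart 1 (Q - C c) Q := by
  refine ⟨h, fun e he => ?_⟩
  rw [coeff_sub, coeff_C, if_neg, sub_zero]
  rintro rfl
  simp at he

/-- The weight in the one-variable Lagrange formula with nodes `0, …, d`. -/
noncomputable def wt (d t : ℕ) : ℚ := ∏ u ∈ (range (d + 1)).erase t, ((t : ℚ) - u)

lemma sum_pow_div_wt (d e : ℕ) (he : e ≤ d) :
    ∑ t ∈ range (d + 1), (t : ℚ) ^ e / wt d t = if e = d then 1 else 0 := by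
  have hvs : Set.InjOn (fun t : ℕ => (t : ℚ)) (range (d + 1)) := Nat.cast_injective.injOn
  have := Lagrange.coeff_eq_sum (s := range (d + 1)) hvs (P := (Polynomial.X ^ e : Polynomial ℚ))
    (by rw [Polynomial.degree_X_pow, card_range]; exact_mod_cast Nat.lt_succ_of_le he)
  simp only [Polynomial.coeff_X_pow, card_range, Polynomial.eval_pow, Polynomial.eval_X,
    Nat.add_sub_cancel] at this
  simp only [wt, ← this, eq_comm]

lemma coeff_formula {n d : ℕ} (P : MvPolynomial (Fin n) ℚ)
    (hP : ∀ e : Fin n →₀ ℕ, n * d < e.degree → coeff e P = 0) :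
    coeff (Finsupp.equivFunOnFinite.symm (fun _ : Fin n => d)) P =
      ∑ c ∈ Fintype.piFinset (fun _ : Fin n => range (d + 1)),
        eval (fun i => (c i : ℚ)) P / ∏ i, wt d (c i) := by
  classical
  have h1 : ∀ c : Fin n → ℕ, eval (fun i => (c i : ℚ)) P / ∏ i, wt d (c i) =
      ∑ e ∈ P.support, coeff e P * ∏ i, ((c i : ℚ) ^ e i / wt d (c i)) := by
    intro c
    rw [eval_eq', Finset.sum_div]
    refine Finset.sum_congr rfl fun e _ => ?_
    rw [Finset.prod_div_distrib, mul_div_assoc]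
  simp only [h1]
  rw [Finset.sum_comm]
  have h2 : ∀ e ∈ P.support, ∑ c ∈ Fintype.piFinset (fun _ : Fin n => range (d + 1)),
      coeff e P * ∏ i, ((c i : ℚ) ^ e i / wt d (c i)) =
      if e = Finsupp.equivFunOnFinite.symm (fun _ : Fin n => d) then coeff e P else 0 := by
    intro e he
    rw [← Finset.mul_sum,
      ← Finset.prod_univ_sum (fun _ => range (d + 1)) (fun i t => (t : ℚ) ^ e i / wt d t)]
    split_ifs with hed
    · have : ∀ i, e i = d := fun i => by rw [hed]; rfl
      rw [Finset.prod_eq_one, mul_one]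
      intro i _
      rw [sum_pow_div_wt _ _ (this i).le, if_pos (this i)]
    · have hdeg : e.degree ≤ n * d := by
        by_contra hlt
        exact (mem_support_iff.1 he) (hP e (by omega))
      have : ∃ i, e i < d := by
        by_contra! hall
        apply hed
        have hs : ∑ i : Fin n, e i ≤ ∑ i : Fin n, d := by
          rw [← Finsupp.degree_eq_sum]; simpa using hdeg
        have hs' := (Finset.sum_eq_sum_iff_of_le (s := univ) (f := fun _ : Fin n => d)
          (g := fun i => e i) (fun i _ => hall i)).1
          (le_antisymm (Finset.sum_le_sum fun i _ => hall i) hs)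
        ext i
        exact (hs' i (mem_univ i)).symm
      obtain ⟨i, hi⟩ := this
      rw [Finset.prod_eq_zero (mem_univ i), mul_zero]
      rw [sum_pow_div_wt _ _ hi.le, if_neg hi.ne]
  rw [Finset.sum_congr rfl h2, Finset.sum_ite_eq']
  split_ifs with h
  · rfl
  · simpa using h

/-- Combinatorial core: the only surviving point. -/
lemma unique_point {N k b : ℕ} (c : Fin (N + 1) → ℕ) (hc : ∀ i, c i ≤ N * k + b)
    (hgap : ∀ i j, i < j → c i + k ≤ c j ∨ c j + k + 1 ≤ c i) :
    (∑ i : Fin (N + 1), k * (i : ℕ) ≤ ∑ i, c i ∧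
      ∑ i, c i ≤ ∑ i : Fin (N + 1), k * (i : ℕ) + (N + 1) * b) ∧
    (∑ i, c i = ∑ i : Fin (N + 1), k * (i : ℕ) → ∀ i, c i = k * i) := by
  classical
  set σ := Tuple.sort c with hσ
  have hmono : Monotone (c ∘ σ) := Tuple.monotone_sort c
  have hstep : ∀ m : Fin N, c (σ m.castSucc) + k ≤ c (σ m.succ) := by
    intro m
    have h1 : c (σ m.castSucc) ≤ c (σ m.succ) := hmono (Fin.castSucc_lt_succ (i := m)).le
    have hne : σ m.castSucc ≠ σ m.succ := fun h =>
      (Fin.castSucc_lt_succ (i := m)).ne (σ.injective h)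
    rcases lt_or_gt_of_ne hne with h | h
    · have := hgap _ _ h; omega
    · have := hgap _ _ h; omega
  have hlow : ∀ m : Fin (N + 1), k * (m : ℕ) ≤ c (σ m) := by
    intro m
    induction m using Fin.induction with
    | zero => simp
    | succ m ih =>
      have := hstep m
      simp only [Fin.val_castSucc, Fin.val_succ] at *
      rw [mul_add]; omega
  have hhigh : ∀ m : Fin (N + 1), c (σ m) ≤ k * m + b := by
    intro m
    induction m using Fin.reverseInduction with
    | last => have := hc (σ (Fin.last N)); simpa [mul_comm] using this
    | cast m ih =>
      have := hstep m
      simp only [Fin.val_castSucc, Fin.val_succ] at *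
      rw [mul_add] at ih; omega
  have hsum : ∑ i, c i = ∑ i, c (σ i) := (Equiv.sum_comp σ c).symm
  refine ⟨⟨?_, ?_⟩, ?_⟩
  · rw [hsum]; exact Finset.sum_le_sum fun i _ => hlow i
  · rw [hsum]
    refine (Finset.sum_le_sum fun i _ => hhigh i).trans ?_
    simp [Finset.sum_add_distrib]
  · intro heq
    rw [hsum] at heq
    have hval := (Finset.sum_eq_sum_iff_of_le (s := univ) (fun i _ => hlow i)).1 heq.symm
    rcases Nat.eq_zero_or_pos k with hk | hk
    · intro i
      have := hval (σ.symm i) (mem_univ _)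
      simp [hk] at this ⊢
      exact this.symm
    have hsm : StrictMono σ := by
      rw [Fin.strictMono_iff_lt_succ]
      intro m
      have hne : σ m.castSucc ≠ σ m.succ := fun h =>
        (Fin.castSucc_lt_succ (i := m)).ne (σ.injective h)
      rcases lt_or_gt_of_ne hne with h | h
      · exact h
      · exfalso
        have h3 := hgap _ _ h
        have h1 := hval m.castSucc (mem_univ _)
        have h2 := hval m.succ (mem_univ _)
        simp only [Fin.val_castSucc, Fin.val_succ, mul_add] at h1 h2
        omega
    have hid : ∀ i, σ i = i := by
      intro i
      have := Subsingleton.elim (StrictMono.orderIsoOfSurjective σ hsm σ.surjective)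
        (OrderIso.refl _)
      exact congrArg (fun f : Fin (N + 1) ≃o Fin (N + 1) => f i) this
    intro i
    have := hval i (mem_univ _)
    rw [hid] at this
    exact this.symm

lemma wt_eq (t r : ℕ) : wt (t + r) t = (-1) ^ r * (t.factorial : ℚ) * r.factorial := by
  induction r with
  | zero =>
    have h : (range (t + 0 + 1)).erase t = range t := by
      ext x; simp only [mem_erase, mem_range]; omega
    rw [wt, h]
    clear h
    have : ∀ t : ℕ, ∏ u ∈ range t, ((t : ℚ) - u) = t.factorial := by
      intro t
      induction t with
      | zero => simp
      | succ t ih =>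
        rw [Finset.prod_range_succ', Nat.factorial_succ]
        push_cast
        rw [← ih, mul_comm]
        congr 1
        · ring
        · exact Finset.prod_congr rfl fun x _ => by ring
    rw [this]; simp
  | succ r ih =>
    have h : (range (t + (r + 1) + 1)).erase t = insert (t + r + 1) ((range (t + r + 1)).erase t) := by
      ext x; simp only [mem_erase, mem_range, mem_insert]; omega
    rw [wt, h, Finset.prod_insert (by simp)]
    rw [wt] at ih
    rw [ih, Nat.factorial_succ]
    push_cast
    ring

lemma prod_asc (a k : ℕ) :
    (∏ s ∈ range k, ((a : ℚ) + s + 1)) * a.factorial = (a + k).factorial := by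
  induction k with
  | zero => simp
  | succ k ih =>
    rw [Finset.prod_range_succ, mul_right_comm, ih, ← add_assoc, Nat.factorial_succ]
    push_cast; ring

lemma prod_desc (a k : ℕ) :
    (∏ s ∈ range k, ((a : ℚ) + k - s)) * a.factorial = (a + k).factorial := by
  rw [← prod_asc, ← Finset.prod_range_reflect]
  congr 1
  refine Finset.prod_congr rfl fun s hs => ?_
  have : s + 1 ≤ k := mem_range.1 hs
  rw [Nat.sub_sub, Nat.add_comm 1 s, Nat.cast_sub this]
  push_cast; ring

/-- shift constants -/
def shiftC {n : ℕ} (j i : Fin n) (s : ℕ) : ℕ := s + if j < i then 1 else 0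

lemma row_low (j k : ℕ) :
    ∏ i ∈ range j, ∏ s ∈ range k, ((k : ℚ) * j - k * i - s) = (k * j).factorial := by
  induction j with
  | zero => simp
  | succ j ih =>
    rw [Finset.prod_range_succ']
    have h1 : ∏ i ∈ range j, ∏ s ∈ range k,
        ((k : ℚ) * ((j + 1 : ℕ) : ℚ) - k * ((i + 1 : ℕ) : ℚ) - s) = (k * j).factorial := by
      rw [← ih]
      refine Finset.prod_congr rfl fun i _ => Finset.prod_congr rfl fun s _ => ?_
      push_cast; ring
    rw [h1, mul_comm, mul_add, mul_one, ← prod_desc]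
    congr 1
    refine Finset.prod_congr rfl fun s _ => ?_
    push_cast; ring

lemma row_high (r k : ℕ) :
    (∏ i ∈ range r, ∏ s ∈ range k, (-((k : ℚ) * (i + 1)) - s - 1)) * k.factorial =
      (-1) ^ (k * r) * (k * (r + 1)).factorial := by
  induction r with
  | zero => simp
  | succ r ih =>
    rw [Finset.prod_range_succ, mul_right_comm, ih]
    have : ∏ s ∈ range k, (-((k : ℚ) * (r + 1)) - s - 1) =
        (-1) ^ k * ∏ s ∈ range k, (((k * (r + 1) : ℕ) : ℚ) + s + 1) := by
      rw [← card_range k, ← Finset.prod_const, card_range, ← Finset.prod_mul_distrib]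
      refine Finset.prod_congr rfl fun s _ => ?_
      push_cast; ring
    rw [this, mul_add k (r + 1) 1, mul_one, ← prod_asc, mul_add k r 1, mul_one, pow_add]
    ring

lemma row_eq (N k : ℕ) (j : Fin (N + 1)) :
    (∏ i ∈ univ.erase j, ∏ s ∈ range k, ((k : ℚ) * (j : ℕ) - k * (i : ℕ) - shiftC j i s)) *
      k.factorial = (k * j).factorial * ((-1) ^ (k * (N - j)) * (k * (N - j + 1)).factorial) := by
  rw [← row_low, ← row_high, ← mul_assoc]
  congr 1
  have h : ∏ i ∈ univ.erase j, ∏ s ∈ range k,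
      ((k : ℚ) * (j : ℕ) - k * (i : ℕ) - shiftC j i s) =
      ∏ i ∈ (range (N + 1)).erase j, ∏ s ∈ range k,
      ((k : ℚ) * (j : ℕ) - k * (i : ℕ) - (s + if (j : ℕ) < i then 1 else 0 : ℕ)) := by
    refine Finset.prod_bij (fun i _ => (i : ℕ)) ?_ ?_ ?_ ?_
    · intro i hi
      simp only [mem_erase, mem_univ, and_true, mem_range] at hi ⊢
      exact ⟨fun h => hi (Fin.ext h), i.2⟩
    · intro a _ b _ h; exact Fin.ext h
    · intro x hx
      simp only [mem_erase, mem_range] at hx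
      exact ⟨⟨x, hx.2⟩, by simp [Fin.ext_iff, hx.1], rfl⟩
    · intro i _
      rfl
  obtain ⟨j, hj⟩ := j
  simp only at h ⊢
  rw [h]
  have hset : (range (N + 1)).erase j = range j ∪ (range (N - j)).image (fun i => j + 1 + i) := by
    ext x
    simp only [mem_erase, mem_range, mem_union, mem_image]
    constructor
    · rintro ⟨h1, h2⟩
      rcases lt_or_gt_of_ne h1 with h | h
      · exact Or.inl h
      · exact Or.inr ⟨x - (j + 1), by omega, by omega⟩
    · rintro (h | ⟨a, h1, h2⟩) <;> omega
  rw [hset, Finset.prod_union, Finset.prod_image]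
  · congr 1
    · refine Finset.prod_congr rfl fun i hi => Finset.prod_congr rfl fun s _ => ?_
      rw [if_neg (by have := mem_range.1 hi; omega)]
      simp
    · refine Finset.prod_congr rfl fun i hi => Finset.prod_congr rfl fun s _ => ?_
      rw [if_pos (by omega)]
      push_cast; ring
  · intro a _ b _ h; simpa using h
  · rw [Finset.disjoint_left]
    intro x hx hx'
    simp only [mem_range, mem_image] at hx hx'
    omega

/-- The shifted polynomial. -/
noncomputable def shifted (N b k : ℕ) : MvPolynomial (Fin (N + 1)) ℚ :=
  (∏ s ∈ range ((N + 1) * b), ((∑ l : Fin (N + 1), X l) -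
      C (((∑ i : Fin (N + 1), k * (i : ℕ)) + s + 1 : ℕ) : ℚ))) *
    ∏ j : Fin (N + 1), ∏ i ∈ univ.erase j, ∏ s ∈ range k, (X j - X i - C (shiftC j i s : ℚ))

lemma topPart_shifted (N b k : ℕ) :
    TopPart ((N + 1) * (N * k + b)) (shifted N b k)
      ((∑ l : Fin (N + 1), X l) ^ ((N + 1) * b) *
        ∏ j : Fin (N + 1), ∏ i ∈ univ.erase j, (X j - X i : MvPolynomial (Fin (N + 1)) ℚ) ^ k) := by
  have h1 : TopPart (∑ s ∈ range ((N + 1) * b), 1)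
      (∏ s ∈ range ((N + 1) * b), ((∑ l : Fin (N + 1), X l) -
        C (((∑ i : Fin (N + 1), k * (i : ℕ)) + s + 1 : ℕ) : ℚ)))
      (∏ s ∈ range ((N + 1) * b), (∑ l : Fin (N + 1), X l)) := by
    refine TopPart.prod _ _ _ _ fun s _ => TopPart.sub_C ?_ _
    exact IsHomogeneous.sum _ _ _ fun i _ => isHomogeneous_X _ _
  have h2 : TopPart (∑ j : Fin (N + 1), ∑ i ∈ univ.erase j, ∑ s ∈ range k, 1)
      (∏ j : Fin (N + 1), ∏ i ∈ univ.erase j, ∏ s ∈ range k,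
        (X j - X i - C (shiftC j i s : ℚ)))
      (∏ j : Fin (N + 1), ∏ i ∈ univ.erase j, ∏ s ∈ range k,
        (X j - X i : MvPolynomial (Fin (N + 1)) ℚ)) := by
    refine TopPart.prod _ _ _ _ fun j _ => TopPart.prod _ _ _ _ fun i _ =>
      TopPart.prod _ _ _ _ fun s _ => TopPart.sub_C ?_ _
    exact (isHomogeneous_X _ _).sub (isHomogeneous_X _ _)
  have h := h1.mul h2
  simp only [Finset.prod_const, card_range, Finset.sum_const, smul_eq_mul, mul_one,
    card_erase_of_mem (mem_univ _), card_univ, Fintype.card_fin, Nat.add_sub_cancel] at h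
  rw [show (N + 1) * (N * k + b) = (N + 1) * b + (N + 1) * (N * k) by ring]
  exact h

lemma eval_shifted (N b k : ℕ) (c : Fin (N + 1) → ℕ) :
    eval (fun i => (c i : ℚ)) (shifted N b k) =
      (∏ s ∈ range ((N + 1) * b), ((∑ l, (c l : ℚ)) -
        (((∑ i : Fin (N + 1), k * (i : ℕ)) + s + 1 : ℕ) : ℚ))) *
      ∏ j, ∏ i ∈ univ.erase j, ∏ s ∈ range k, ((c j : ℚ) - c i - shiftC j i s) := by
  simp only [shifted, map_mul, map_prod, map_sub, map_sum, eval_X, eval_C]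

lemma eval_shifted_eq_zero (N b k : ℕ) (c : Fin (N + 1) → ℕ) (hc : ∀ i, c i ≤ N * k + b)
    (hne : c ≠ fun i : Fin (N + 1) => k * (i : ℕ)) : eval (fun i => (c i : ℚ)) (shifted N b k) = 0 := by
  by_contra h0
  rw [eval_shifted] at h0
  have hA := left_ne_zero_of_mul h0
  have hB := right_ne_zero_of_mul h0
  simp only [Finset.prod_ne_zero_iff] at hA hB
  have hgap : ∀ i j, i < j → c i + k ≤ c j ∨ c j + k + 1 ≤ c i := by
    intro i j hij
    by_contra! hcon
    rcases le_or_gt (c i) (c j) with h | h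
    · apply hB j (mem_univ _) i (by simp [hij.ne]) (c j - c i) (by simp; omega)
      rw [shiftC, if_neg (not_lt.2 hij.le), add_zero, Nat.cast_sub h]
      ring
    · apply hB i (mem_univ _) j (by simp [hij.ne']) (c i - c j - 1) (by simp; omega)
      rw [shiftC, if_pos hij, show c i - c j - 1 + 1 = c i - c j by omega, Nat.cast_sub h.le]
      ring
  obtain ⟨⟨hl, hu⟩, heq⟩ := unique_point c hc hgap
  rcases hl.eq_or_lt with h | h
  · exact hne (funext (heq h.symm))
  · refine hA (∑ i, c i - ∑ i : Fin (N + 1), k * (i : ℕ) - 1) (by simp only [mem_range]; omega) ?_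
    rw [← Nat.cast_sum, sub_eq_zero]
    congr 1
    omega

lemma eval_shifted_point (N b k : ℕ) :
    eval (fun i : Fin (N + 1) => ((k * (i : ℕ) : ℕ) : ℚ)) (shifted N b k) =
      (-1) ^ ((N + 1) * b) * (((N + 1) * b).factorial : ℚ) *
      ∏ j : Fin (N + 1), ((k * j).factorial *
        ((-1) ^ (k * (N - j)) * (k * (N - j + 1)).factorial) / k.factorial : ℚ) := by
  rw [eval_shifted N b k (fun i : Fin (N + 1) => k * (i : ℕ))]
  congr 1
  · have := prod_asc 0 ((N + 1) * b)
    simp only [Nat.cast_zero, zero_add, Nat.factorial_zero, Nat.cast_one, mul_one] at this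
    rw [← this, ← card_range ((N + 1) * b), ← Finset.prod_const, card_range,
      ← Finset.prod_mul_distrib]
    refine Finset.prod_congr rfl fun s _ => ?_
    push_cast; ring
  · refine Finset.prod_congr rfl fun j _ => ?_
    rw [← row_eq, mul_div_assoc, div_self (by exact_mod_cast k.factorial_ne_zero), mul_one]
    simp only [Nat.cast_mul]

/-- **Leading coefficient identity for the Morris constant term** (Corollary 6.4).
`CT_x (x_1+⋯+x_n)^(nb) ∏_l x_l^(-b) ∏_{1≤i≠j≤n}(1-x_i/x_j)^k
  = (nb)! ∏_{l=0}^{n-1} (k(l+1))!/((b+kl)! k!)`.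
Clearing denominators, the constant term equals the coefficient of
`∏_l x_l^((n-1)k + b)` in `(x_1+⋯+x_n)^(nb) · ∏_{i≠j}(x_j-x_i)^k`. -/
theorem morris_leading_coefficient (n b k : ℕ) (hn : 1 ≤ n) :
    MvPolynomial.coeff
      (Finsupp.equivFunOnFinite.symm (fun _ : Fin n => (n - 1) * k + b))
      ((∑ l : Fin n, X l) ^ (n * b) *
        ∏ j : Fin n, ∏ i ∈ Finset.univ.erase j,
          (X j - X i : MvPolynomial (Fin n) ℚ) ^ k)
      = ((n * b).factorial : ℚ) *
          ∏ l ∈ Finset.range n,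
            ((k * (l + 1)).factorial : ℚ) / ((b + k * l).factorial * k.factorial) := by
  obtain ⟨N, rfl⟩ : ∃ N, n = N + 1 := ⟨n - 1, by omega⟩
  rw [Nat.add_sub_cancel]
  have htop := topPart_shifted N b k
  have hdeg : (Finsupp.equivFunOnFinite.symm (fun _ : Fin (N + 1) => N * k + b)).degree =
      (N + 1) * (N * k + b) := by
    rw [Finsupp.degree_eq_sum]; simp
  rw [← htop.2 _ hdeg.ge, coeff_formula (shifted N b k)
    (fun e he => by rw [htop.2 e he.le]; exact htop.1.coeff_eq_zero he.ne'),
    Finset.sum_eq_single (fun i : Fin (N + 1) => k * (i : ℕ))]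
  · rw [eval_shifted_point, mul_div_assoc, ← Finset.prod_div_distrib,
      mul_comm ((-1 : ℚ) ^ _), mul_assoc]
    congr 1
    have hpow : (-1 : ℚ) ^ ((N + 1) * b) = ∏ j : Fin (N + 1), (-1 : ℚ) ^ b := by
      simp [← pow_mul, mul_comm]
    rw [hpow, ← Finset.prod_mul_distrib, ← Finset.prod_range_reflect, ← Fin.prod_univ_eq_prod_range
      (fun l => ((k * (N + 1 - 1 - l + 1)).factorial : ℚ) /
        ((b + k * (N + 1 - 1 - l)).factorial * k.factorial)) (N + 1)]
    refine Finset.prod_congr rfl fun j _ => ?_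
    have hj : (j : ℕ) ≤ N := Nat.lt_succ_iff.1 j.2
    have hd : N * k + b = k * j + (b + k * (N - j)) := by
      have hr : (j : ℕ) + (N - j) = N := Nat.add_sub_cancel' hj
      calc N * k + b = ((j : ℕ) + (N - j)) * k + b := by rw [hr]
        _ = _ := by ring
    rw [hd, wt_eq, Nat.add_sub_cancel, pow_add]
    have f1 : ((k * (j : ℕ)).factorial : ℚ) ≠ 0 := by exact_mod_cast Nat.factorial_ne_zero _
    have f2 : ((b + k * (N - (j : ℕ))).factorial : ℚ) ≠ 0 := by
      exact_mod_cast Nat.factorial_ne_zero _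
    have f3 : (k.factorial : ℚ) ≠ 0 := by exact_mod_cast Nat.factorial_ne_zero _
    have f4 : (-1 : ℚ) ^ b ≠ 0 := pow_ne_zero _ (by norm_num)
    have f5 : (-1 : ℚ) ^ (k * (N - (j : ℕ))) ≠ 0 := pow_ne_zero _ (by norm_num)
    generalize (-1 : ℚ) ^ b = x at *
    generalize (-1 : ℚ) ^ (k * (N - (j : ℕ))) = y at *
    field_simp
  · intro c hc hne
    rw [eval_shifted_eq_zero N b k c (fun i => ?_) hne, zero_div]
    have := Fintype.mem_piFinset.1 hc i
    have := mem_range.1 this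
    omega
  · intro h
    exfalso
    apply h
    rw [Fintype.mem_piFinset]
    intro i
    have hi : (i : ℕ) ≤ N := Nat.lt_succ_iff.1 i.2
    have := Nat.mul_le_mul_left k hi
    rw [mem_range, mul_comm N k]
    omega
end

section
/- For nonnegative integers $b, k$ and $n\ge 2$ with $nb \ge 2$, the constant term $\mathrm{CT}_x\, x_1^2 (x_1+\cdots+x_n)^{nb-2}\prod_{l=1}^n x_l^{-b}\prod_{1\le i\ne j\le n}(1-x_i/x_j)^{k}$ equals $-b(nk-k-b+1)(nb-2)!\prod_{l=0}^{n-1}\frac{(k(l+1))!}{(b+kl)!\,k!}$. -/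
open MvPolynomial Finset

set_option linter.unusedSectionVars false
set_option linter.unusedSimpArgs false

namespace Morris
variable {σ : Type*} [Fintype σ] [DecidableEq σ]

/-- Weight of an exponent: reciprocal factorial, zero out of range. -/
noncomputable def wt (B m : ℕ) : ℚ := if m ≤ B then 1 / ((B - m).factorial : ℚ) else 0

theorem wt_succ (B m : ℕ) : wt B (m + 1) = ((B : ℚ) - m) * wt B m := by
  unfold wt
  rcases lt_trichotomy m B with h | h | h
  · obtain ⟨c, rfl⟩ : ∃ c, B = m + 1 + c := ⟨B - (m + 1), by omega⟩
    rw [if_pos (by omega), if_pos (by omega), show m + 1 + c - (m + 1) = c by omega,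
      show m + 1 + c - m = c + 1 by omega, Nat.factorial_succ]
    have := Nat.factorial_pos c
    push_cast
    field_simp
    ring
  · subst h
    simp
  · rw [if_neg (by omega), if_neg (by omega)]; simp

theorem wt_succ_succ (B m : ℕ) : wt (B + 1) (m + 1) = wt B m := by
  simp [wt]

/-- The linear functional. -/
noncomputable def L (σ : Type*) [Fintype σ] (B : ℕ) : MvPolynomial σ ℚ →ₗ[ℚ] ℚ :=
  (MvPolynomial.basisMonomials σ ℚ).constr ℚ (fun m => ∏ i, wt B (m i))

theorem L_monomial (B : ℕ) (m : σ →₀ ℕ) (c : ℚ) :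
    L σ B (monomial m c) = c * ∏ i, wt B (m i) := by
  have h : monomial m c = c • (MvPolynomial.basisMonomials σ ℚ) m := by
    simp [MvPolynomial.smul_monomial]
  rw [h, map_smul, L, Module.Basis.constr_basis, smul_eq_mul]

theorem L_X_mul (B : ℕ) (i : σ) (g : MvPolynomial σ ℚ) :
    L σ B (X i * g) = B * L σ B g - L σ B (X i * pderiv i g) := by
  induction g using MvPolynomial.induction_on' with
  | add p q hp hq => simp only [mul_add, map_add, hp, hq]; ring
  | monomial m c =>
    rw [X_mul_pderiv_monomial, map_nsmul, X, monomial_mul, L_monomial, L_monomial]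
    rw [← Finset.mul_prod_erase univ _ (mem_univ i), ← Finset.mul_prod_erase univ (fun j => wt B (m j)) (mem_univ i)]
    have h1 : ∏ x ∈ univ.erase i, wt B ((Finsupp.single i 1 + m : σ →₀ ℕ) x) = ∏ x ∈ univ.erase i, wt B (m x) := by
      refine Finset.prod_congr rfl fun x hx => ?_
      simp [Finsupp.single_apply, (Finset.ne_of_mem_erase hx).symm]
    rw [h1]
    have h2 : (Finsupp.single i 1 + m : σ →₀ ℕ) i = m i + 1 := by simp [add_comm]
    rw [h2, wt_succ, nsmul_eq_mul]
    ring

theorem L_prod_X_mul (B : ℕ) (g : MvPolynomial σ ℚ) :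
    L σ (B + 1) ((∏ i, X i) * g) = L σ B g := by
  induction g using MvPolynomial.induction_on' with
  | add p q hp hq => simp only [mul_add, map_add, hp, hq]
  | monomial m c =>
    have : (∏ i, X i : MvPolynomial σ ℚ) = monomial (∑ i, Finsupp.single i 1) 1 := by
      rw [monomial_sum_one]; rfl
    rw [this, monomial_mul, L_monomial, L_monomial, one_mul]
    congr 1
    refine Finset.prod_congr rfl fun x _ => ?_
    rw [← wt_succ_succ B (m x)]
    congr 1
    simp [Finsupp.finsetSum_apply, Finsupp.single_apply, add_comm]

theorem L_rename (B : ℕ) (e : σ ≃ σ) (g : MvPolynomial σ ℚ) :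
    L σ B (rename e g) = L σ B g := by
  induction g using MvPolynomial.induction_on' with
  | add p q hp hq => simp only [map_add, hp, hq]
  | monomial m c =>
    rw [rename_monomial, L_monomial, L_monomial]
    congr 1
    rw [← Equiv.prod_comp e]
    refine Finset.prod_congr rfl fun x _ => ?_
    rw [Finsupp.mapDomain_apply e.injective]

theorem coeff_eq_L (B N : ℕ) : ∀ (d : ℕ) (f : MvPolynomial σ ℚ), f.IsHomogeneous d →
    d + N = Fintype.card σ * B →
    coeff (Finsupp.equivFunOnFinite.symm (fun _ : σ => B)) (f * (∑ l, X l) ^ N)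
      = N.factorial * L σ B f := by
  induction N with
  | zero =>
    intro d f hf hd
    rw [pow_zero, mul_one, Nat.factorial_zero, Nat.cast_one, one_mul]
    rw [f.as_sum, coeff_sum, map_sum]
    refine Finset.sum_congr rfl fun m hm => ?_
    have hdeg : ∑ i, m i = Fintype.card σ * B := by
      have := hf (mem_support_iff.1 hm)
      rw [Finsupp.weight_apply, Finsupp.sum_fintype _ _ (by simp)] at this
      simp at this
      omega
    rw [coeff_monomial, L_monomial]
    split_ifs with h
    · subst h
      simp [wt]
    · by_cases hle : ∀ i, m i ≤ B
      · exfalso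
        apply h
        ext i
        have h3 := (Finset.sum_eq_sum_iff_of_le (s := univ) (f := m) (g := fun _ => B) (fun i _ => hle i)).1
          (by rw [hdeg]; simp)
        simpa using h3 i (mem_univ i)
      · push Not at hle
        obtain ⟨i, hi⟩ := hle
        rw [Finset.prod_eq_zero (mem_univ i), mul_zero]
        simp [wt, hi]
  | succ N ih =>
    intro d f hf hd
    rw [pow_succ', ← mul_assoc, ih (d + 1) _ (hf.mul (IsHomogeneous.sum _ _ _ fun i _ => isHomogeneous_X _ i)) (by omega)]
    have h : L σ B (f * ∑ l, X l) = (N + 1) * L σ B f := by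
      rw [Finset.mul_sum, map_sum]
      have : ∀ i ∈ (univ : Finset σ), L σ B (f * X i) = B * L σ B f - L σ B (X i * pderiv i f) := by
        intro i _
        rw [mul_comm, L_X_mul]
      rw [Finset.sum_congr rfl this, Finset.sum_sub_distrib, ← map_sum, hf.sum_X_mul_pderiv, map_nsmul]
      have h4 : (d : ℚ) + (N + 1) = Fintype.card σ * B := by exact_mod_cast hd
      simp
      linear_combination - L σ B f * h4
    rw [h, Nat.factorial_succ]
    push_cast; ring

/-! Part 3: Aomoto's recursion. -/

noncomputable def V (σ : Type*) [Fintype σ] [DecidableEq σ] : MvPolynomial σ ℚ :=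
  ∏ p ∈ (univ : Finset σ).offDiag, (X p.1 - X p.2)

noncomputable def W (p : σ × σ) : MvPolynomial σ ℚ :=
  ∏ q ∈ (univ : Finset σ).offDiag.erase p, (X q.1 - X q.2)

theorem V_eq (i j : σ) (h : i ≠ j) : (X i - X j) * W (i, j) = V σ := by
  have hm : (i, j) ∈ (univ : Finset σ).offDiag := by simp [h]
  unfold V W
  rw [← Finset.mul_prod_erase _ _ hm]

theorem X_sub_ne (i j : σ) (h : i ≠ j) : (X i - X j : MvPolynomial σ ℚ) ≠ 0 :=
  sub_ne_zero.2 ((MvPolynomial.X_injective).ne h)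

theorem W_symm (i j : σ) (h : i ≠ j) : W (j, i) = - W (i, j) := by
  apply mul_left_cancel₀ (X_sub_ne i j h)
  have h1 := V_eq i j h
  have h2 := V_eq j i h.symm
  linear_combination h1 - h2

theorem V_rename (e : σ ≃ σ) : rename e (V σ) = V σ := by
  unfold V
  rw [map_prod]
  refine Finset.prod_equiv (e.prodCongr e) ?_ ?_
  · intro p; simp
  · intro p _; simp

theorem W_rename (i j : σ) (h : i ≠ j) : rename (Equiv.swap i j) (W (i, j)) = - W (i, j) := by
  apply mul_left_cancel₀ (X_sub_ne i j h)
  have h1 := V_eq i j h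
  have h2 := congrArg (rename (Equiv.swap i j)) h1
  rw [V_rename, map_mul, map_sub, rename_X, rename_X, Equiv.swap_apply_left, Equiv.swap_apply_right] at h2
  linear_combination h1 - h2

theorem pderiv_prod' {ι : Type*} [DecidableEq ι] (s : Finset ι) (f : ι → MvPolynomial σ ℚ) (i : σ) :
    pderiv i (∏ p ∈ s, f p) = ∑ p ∈ s, (∏ q ∈ s.erase p, f q) * pderiv i (f p) := by
  induction s using Finset.induction_on with
  | empty => simp
  | insert a s ha ih =>
    rw [Finset.prod_insert ha, Finset.sum_insert ha, Finset.erase_insert ha, pderiv_mul, ih, Finset.mul_sum,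
      mul_comm]
    congr 1
    refine Finset.sum_congr rfl fun p hp => ?_
    have hne : a ≠ p := fun h => ha (h ▸ hp)
    rw [Finset.erase_insert_of_ne hne, Finset.prod_insert (by simp [ha]), mul_assoc]

theorem pderiv_V (i : σ) : pderiv i (V σ) = 2 * ∑ j ∈ univ.erase i, W (i, j) := by
  unfold V
  rw [pderiv_prod']
  have h1 : ∀ p ∈ (univ : Finset σ).offDiag,
      (∏ q ∈ (univ : Finset σ).offDiag.erase p, (X q.1 - X q.2)) * pderiv i (X p.1 - X p.2 : MvPolynomial σ ℚ)
      = (if p.1 = i then W p else 0) - (if p.2 = i then W p else 0) := by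
    intro p _
    rw [map_sub, pderiv_X, pderiv_X]
    simp only [W, Pi.single_apply, mul_sub, mul_ite, mul_one, mul_zero, eq_comm (a := i)]
  rw [Finset.sum_congr rfl h1, Finset.sum_sub_distrib, ← Finset.sum_filter, ← Finset.sum_filter]
  have e1 : ∑ p ∈ (univ : Finset σ).offDiag with p.1 = i, W p = ∑ j ∈ univ.erase i, W (i, j) := by
    symm
    refine Finset.sum_bij' (fun j _ => (i, j)) (fun p _ => p.2) ?_ ?_ ?_ ?_ ?_
    · intro j hj; simpa [eq_comm] using hj
    · rintro ⟨p, q⟩ hp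
      simp at hp ⊢
      rintro rfl
      exact hp.1 hp.2
    · intros; rfl
    · rintro ⟨p, q⟩ hp
      simp at hp ⊢
      exact hp.2.symm
    · intros; rfl
  have e2 : ∑ p ∈ (univ : Finset σ).offDiag with p.2 = i, W p = ∑ j ∈ univ.erase i, - W (i, j) := by
    symm
    refine Finset.sum_bij' (fun j _ => (j, i)) (fun p _ => p.1) ?_ ?_ ?_ ?_ ?_
    · intro j hj; simpa using hj
    · rintro ⟨p, q⟩ hp
      simp at hp ⊢
      rintro rfl
      exact hp.1 hp.2.symm
    · intros; rfl
    · rintro ⟨p, q⟩ hp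
      simp at hp ⊢
      exact hp.2.symm
    · intro j hj
      rw [W_symm i j (Finset.ne_of_mem_erase hj).symm]
  rw [e1, e2, Finset.sum_neg_distrib]
  ring

noncomputable def R (k : ℕ) (i j : σ) : MvPolynomial σ ℚ := (k : MvPolynomial σ ℚ) * V σ ^ (k - 1) * W (i, j)

theorem R_eq (k : ℕ) (i j : σ) (h : i ≠ j) : (X i - X j) * R k i j = (k : MvPolynomial σ ℚ) * V σ ^ k := by
  rcases k with _ | k
  · simp [R]
  · rw [R, Nat.add_sub_cancel, pow_succ]
    linear_combination ((k + 1 : ℕ) : MvPolynomial σ ℚ) * V σ ^ k * V_eq i j h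

theorem R_rename (k : ℕ) (i j : σ) (h : i ≠ j) : rename (Equiv.swap i j) (R k i j) = - R k i j := by
  rw [R, map_mul, map_mul, map_pow, V_rename, W_rename i j h, map_natCast]
  ring

theorem pderiv_D (k : ℕ) (i : σ) : pderiv i (V σ ^ k) = 2 * ∑ j ∈ univ.erase i, R k i j := by
  rw [pderiv_pow, pderiv_V]
  simp only [R, ← Finset.mul_sum]
  ring

/-- Antisymmetrisation. -/
theorem L_R (B k : ℕ) (i j : σ) (h : i ≠ j) (f g : MvPolynomial σ ℚ)
    (hg : f - rename (Equiv.swap i j) f = (X i - X j) * g) :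
    2 * L σ B (f * R k i j) = k * L σ B (g * V σ ^ k) := by
  have h1 : L σ B (f * R k i j) = - L σ B (rename (Equiv.swap i j) f * R k i j) := by
    rw [← L_rename B (Equiv.swap i j) (f * R k i j), map_mul, R_rename k i j h, mul_neg, map_neg]
  have h2 : (f - rename (Equiv.swap i j) f) * R k i j = (k : ℚ) • (g * V σ ^ k) := by
    rw [hg, MvPolynomial.smul_eq_C_mul, map_natCast]
    linear_combination g * R_eq k i j h
  have h3 := congrArg (L σ B) h2
  rw [sub_mul, map_sub, map_smul, smul_eq_mul] at h3
  linarith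

theorem aomoto (B k : ℕ) (i : σ) (h : MvPolynomial σ ℚ) :
    L σ B (X i * h * V σ ^ k) = B * L σ B (h * V σ ^ k) - L σ B (X i * pderiv i h * V σ ^ k)
      - ∑ j ∈ univ.erase i, 2 * L σ B (X i * h * R k i j) := by
  rw [mul_assoc, L_X_mul, pderiv_mul, pderiv_D]
  have : X i * (pderiv i h * V σ ^ k + h * (2 * ∑ j ∈ univ.erase i, R k i j))
      = X i * pderiv i h * V σ ^ k + (2 : ℚ) • ∑ j ∈ univ.erase i, X i * h * R k i j := by
    rw [MvPolynomial.smul_eq_C_mul, ← Finset.mul_sum, map_ofNat]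
    ring
  rw [this, map_add, map_smul, map_sum, ← Finset.mul_sum, smul_eq_mul]
  ring

theorem rename_prod_X (S : Finset σ) (e : σ ≃ σ) :
    rename e (∏ l ∈ S, X l : MvPolynomial σ ℚ) = ∏ l ∈ S, X (e l) := by
  rw [map_prod]; simp

theorem aomoto_prod (B k : ℕ) (i : σ) (S : Finset σ) (hi : i ∉ S) :
    L σ B ((∏ l ∈ insert i S, X l) * V σ ^ k)
      = ((B : ℚ) - k * ((Fintype.card σ : ℚ) - 1 - S.card)) * L σ B ((∏ l ∈ S, X l) * V σ ^ k) := by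
  rw [Finset.prod_insert hi, aomoto]
  have hd : pderiv i (∏ l ∈ S, X l : MvPolynomial σ ℚ) = 0 := by
    rw [pderiv_prod']
    refine Finset.sum_eq_zero fun l hl => ?_
    have hne : l ≠ i := by rintro rfl; exact hi hl
    rw [pderiv_X_of_ne hne, mul_zero]
  rw [hd, mul_zero, zero_mul, map_zero, sub_zero]
  have key : ∀ j ∈ univ.erase i, 2 * L σ B (X i * (∏ l ∈ S, X l) * R k i j)
      = if j ∈ S then 0 else k * L σ B ((∏ l ∈ S, X l) * V σ ^ k) := by
    intro j hj
    have hij : i ≠ j := (Finset.ne_of_mem_erase hj).symm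
    split_ifs with hjS
    · rw [L_R B k i j hij _ 0, zero_mul, map_zero, mul_zero]
      rw [map_mul, rename_prod_X, rename_X, Equiv.swap_apply_left, ← Finset.mul_prod_erase S _ hjS,
        ← Finset.mul_prod_erase S (fun l => X (Equiv.swap i j l) : σ → MvPolynomial σ ℚ) hjS, Equiv.swap_apply_right]
      rw [Finset.prod_congr rfl (s₁ := S.erase j) (g := fun l => (X l : MvPolynomial σ ℚ)) (f := fun l => X (Equiv.swap i j l))]
      · ring
      · intro l hl
        rw [Equiv.swap_apply_of_ne_of_ne]
        · rintro rfl; exact hi (Finset.mem_of_mem_erase hl)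
        · exact Finset.ne_of_mem_erase hl
    · apply L_R B k i j hij
      rw [map_mul, rename_prod_X, rename_X, Equiv.swap_apply_left,
        Finset.prod_congr rfl (s₁ := S) (g := fun l => (X l : MvPolynomial σ ℚ)) (f := fun l => X (Equiv.swap i j l))]
      · ring
      · intro l hl
        rw [Equiv.swap_apply_of_ne_of_ne]
        · rintro rfl; exact hi hl
        · rintro rfl; exact hjS hl
  rw [Finset.sum_congr rfl key, Finset.sum_ite, Finset.sum_const_zero, zero_add, Finset.sum_const, nsmul_eq_mul]
  have hc : ((univ.erase i).filter (fun j => j ∉ S)).card + S.card + 1 = Fintype.card σ := by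
    have : (univ.erase i).filter (fun j => j ∉ S) = univ \ insert i S := by
      ext j; simp
    rw [this]
    have h1 := Finset.card_sdiff_add_card_eq_card (Finset.subset_univ (insert i S))
    rw [Finset.card_insert_of_notMem hi, Finset.card_univ] at h1
    omega
  rw [← hc]
  push_cast
  ring

theorem aomoto_sq (B k : ℕ) (i : σ) :
    L σ B (X i ^ 2 * V σ ^ k)
      = ((B : ℚ) - 1 - 2 * k * ((Fintype.card σ : ℚ) - 1)) * L σ B (X i * V σ ^ k) := by
  rw [pow_two, aomoto, pderiv_X_self, mul_one]
  have key : ∀ j ∈ univ.erase i, 2 * L σ B (X i * X i * R k i j) = 2 * k * L σ B (X i * V σ ^ k) := by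
    intro j hj
    have hij : i ≠ j := (Finset.ne_of_mem_erase hj).symm
    rw [L_R B k i j hij _ (X i + X j)]
    · rw [add_mul, map_add]
      have : L σ B (X j * V σ ^ k) = L σ B (X i * V σ ^ k) := by
        rw [← L_rename B (Equiv.swap i j), map_mul, map_pow, V_rename, rename_X, Equiv.swap_apply_right]
      rw [this]; ring
    · rw [map_mul, rename_X, Equiv.swap_apply_left]; ring
  rw [Finset.sum_congr rfl key, Finset.sum_const, nsmul_eq_mul, Finset.card_erase_of_mem (mem_univ i),
    Finset.card_univ, Nat.cast_sub (Fintype.card_pos_iff.2 ⟨i⟩)]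
  push_cast
  ring

theorem aomoto_all (n b k : ℕ) (hn : Fintype.card σ = n) (hn1 : 1 ≤ n) (S : Finset σ) :
    L σ ((n - 1) * k + b) ((∏ l ∈ S, X l) * V σ ^ k)
      = (∏ l ∈ range S.card, ((b : ℚ) + k * l)) * L σ ((n - 1) * k + b) (V σ ^ k) := by
  induction S using Finset.induction_on with
  | empty => simp
  | insert i S hi ih =>
    rw [aomoto_prod _ _ _ _ hi, ih, Finset.card_insert_of_notMem hi, Finset.prod_range_succ, hn]
    push_cast [Nat.cast_sub hn1]
    ring

/-! Part 2: Good's proof of the Dyson constant term. -/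

noncomputable def P (s : Finset σ) (a : σ → ℕ) : MvPolynomial σ ℚ :=
  ∏ i ∈ s, ∏ j ∈ s.erase i, (X j - X i) ^ a i

noncomputable def E (s : Finset σ) (a : σ → ℕ) : σ →₀ ℕ :=
  Finsupp.equivFunOnFinite.symm (fun j => if j ∈ s then ∑ i ∈ s.erase j, a i else 0)

theorem lagrange_one {K : Type*} [Field K] (s : Finset σ) (hs : s.Nonempty) (v : σ → K)
    (hv : Function.Injective v) :
    ∑ i ∈ s, ∏ j ∈ s.erase i, (v j / (v j - v i)) = 1 := by
  have h := congrArg (Polynomial.eval 0) (Lagrange.sum_basis (s := s) (hv.injOn) hs)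
  rw [Polynomial.eval_finsetSum, Polynomial.eval_one] at h
  rw [← h]
  refine Finset.sum_congr rfl fun i _ => ?_
  rw [Lagrange.basis, Polynomial.eval_prod]
  refine Finset.prod_congr rfl fun j hj => ?_
  have : v j - v i ≠ 0 := sub_ne_zero.2 (hv.ne (Finset.ne_of_mem_erase hj))
  have h' : v i - v j ≠ 0 := sub_ne_zero.2 (hv.ne (Finset.ne_of_mem_erase hj).symm)
  simp [Lagrange.basisDivisor]
  field_simp
  ring

theorem P_factor (s : Finset σ) (a : σ → ℕ) (i : σ) (hi : i ∈ s) (ha : a i ≠ 0) :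
    P s a = (∏ j ∈ s.erase i, (X j - X i)) * P s (Function.update a i (a i - 1)) := by
  unfold P
  have e1 : ∏ j ∈ s.erase i, (X j - X i : MvPolynomial σ ℚ) ^ a i
      = (∏ j ∈ s.erase i, (X j - X i)) * ∏ j ∈ s.erase i, (X j - X i) ^ Function.update a i (a i - 1) i := by
    rw [← Finset.prod_mul_distrib]
    refine Finset.prod_congr rfl fun j _ => ?_
    rw [Function.update_self, ← pow_succ', Nat.sub_add_cancel (Nat.pos_of_ne_zero ha)]
  have e2 : ∏ l ∈ s.erase i, ∏ j ∈ s.erase l, (X j - X l : MvPolynomial σ ℚ) ^ a l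
      = ∏ l ∈ s.erase i, ∏ j ∈ s.erase l, (X j - X l) ^ Function.update a i (a i - 1) l := by
    refine Finset.prod_congr rfl fun j hj => ?_
    rw [Function.update_of_ne (Finset.ne_of_mem_erase hj)]
  have f1 := Finset.mul_prod_erase s
    (fun l => ∏ j ∈ s.erase l, (X j - X l : MvPolynomial σ ℚ) ^ a l) hi
  have f2 := Finset.mul_prod_erase s
    (fun l => ∏ j ∈ s.erase l, (X j - X l : MvPolynomial σ ℚ) ^ Function.update a i (a i - 1) l) hi
  beta_reduce at f1 f2
  rw [← f1, ← f2, e1, e2, mul_assoc]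

theorem P_rec (s : Finset σ) (hs : s.Nonempty) (a : σ → ℕ) (ha : ∀ i ∈ s, a i ≠ 0) :
    P s a = ∑ i ∈ s, (∏ j ∈ s.erase i, X j) * P s (Function.update a i (a i - 1)) := by
  apply IsFractionRing.injective (MvPolynomial σ ℚ) (FractionRing (MvPolynomial σ ℚ))
  set φ := algebraMap (MvPolynomial σ ℚ) (FractionRing (MvPolynomial σ ℚ))
  have hφ : Function.Injective φ := IsFractionRing.injective _ _
  have hv : Function.Injective (fun i : σ => φ (X i)) := hφ.comp (MvPolynomial.X_injective)
  have h := lagrange_one s hs _ hv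
  rw [map_sum, ← mul_one (φ (P s a)), ← h, Finset.mul_sum]
  refine Finset.sum_congr rfl fun i hi => ?_
  rw [P_factor s a i hi (ha i hi), Finset.prod_div_distrib, map_mul, map_mul, map_prod, map_prod]
  simp only [map_sub]
  have : ∏ j ∈ s.erase i, (φ (X j) - φ (X i)) ≠ 0 := by
    rw [Finset.prod_ne_zero_iff]
    intro j hj
    exact sub_ne_zero.2 (hv.ne (Finset.ne_of_mem_erase hj))
  field_simp

theorem coeff_step (i j : σ) (hij : j ≠ i) (p : MvPolynomial σ ℚ) (m : σ →₀ ℕ)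
    (hd : ∀ q : σ →₀ ℕ, m i < q i → coeff q p = 0) (c : ℕ) :
    coeff (m + Finsupp.single i c) (p * (X i - X j) ^ c) = coeff m p ∧
    ∀ q : σ →₀ ℕ, m i + c < q i → coeff q (p * (X i - X j) ^ c) = 0 := by
  induction c with
  | zero => simpa using hd
  | succ c ih =>
    obtain ⟨h1, h2⟩ := ih
    rw [pow_succ, ← mul_assoc, mul_sub]
    constructor
    · rw [coeff_sub, Finsupp.single_add, ← add_assoc, coeff_mul_X, h1, coeff_mul_X']
      split_ifs
      · rw [h2, sub_zero]
        simp [hij, Finsupp.single_apply]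
      · simp
    · intro q hq
      rw [coeff_sub, coeff_mul_X', coeff_mul_X']
      have e1 : coeff (q - Finsupp.single i 1) (p * (X i - X j) ^ c) = 0 := h2 _ (by simp; omega)
      have e2 : coeff (q - Finsupp.single j 1) (p * (X i - X j) ^ c) = 0 :=
        h2 _ (by simp [hij, Finsupp.single_apply]; omega)
      simp [e1, e2]

theorem coeff_steps (i : σ) (a : σ → ℕ) (t : Finset σ) (hit : i ∉ t) (p : MvPolynomial σ ℚ) (m : σ →₀ ℕ)
    (hd : ∀ q : σ →₀ ℕ, m i < q i → coeff q p = 0) :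
    coeff (m + Finsupp.single i (∑ j ∈ t, a j)) (p * ∏ j ∈ t, (X i - X j) ^ a j) = coeff m p ∧
    ∀ q : σ →₀ ℕ, m i + ∑ j ∈ t, a j < q i → coeff q (p * ∏ j ∈ t, (X i - X j) ^ a j) = 0 := by
  induction t using Finset.induction_on with
  | empty => simpa using hd
  | insert j t hj ih =>
    rw [Finset.mem_insert, not_or] at hit
    obtain ⟨h1, h2⟩ := ih hit.2
    rw [Finset.sum_insert hj, Finset.prod_insert hj, add_comm (a j), mul_comm (_ ^ _), ← mul_assoc]
    have := coeff_step i j (Ne.symm hit.1) (p * ∏ j ∈ t, (X i - X j) ^ a j)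
      (m + Finsupp.single i (∑ j ∈ t, a j)) (by simpa using h2) (a j)
    rw [h1] at this
    rw [Finsupp.single_add, ← add_assoc, ← add_assoc]
    simpa [add_assoc] using this

theorem P_erase (s : Finset σ) (a : σ → ℕ) (i : σ) (hi : i ∈ s) (ha : a i = 0) :
    P s a = P (s.erase i) a * ∏ j ∈ s.erase i, (X i - X j) ^ a j := by
  unfold P
  rw [← Finset.mul_prod_erase s _ hi]
  simp only [ha, pow_zero, Finset.prod_const_one, one_mul]
  rw [← Finset.prod_mul_distrib]
  refine Finset.prod_congr rfl fun j hj => ?_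
  have : i ∈ s.erase j := Finset.mem_erase.2 ⟨(Finset.ne_of_mem_erase hj).symm, hi⟩
  rw [← Finset.mul_prod_erase _ _ this, mul_comm, Finset.erase_right_comm]

theorem P_deg (s : Finset σ) (a : σ → ℕ) (i : σ) (hi : i ∉ s) (q : σ →₀ ℕ) (hq : 0 < q i) :
    coeff q (P s a) = 0 := by
  have : degreeOf i (P s a) = 0 := by
    apply Nat.eq_zero_of_le_zero
    unfold P
    refine (degreeOf_prod_le _ _ _).trans ?_
    apply le_of_eq
    refine Finset.sum_eq_zero fun j hj => Nat.eq_zero_of_le_zero ?_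
    refine (degreeOf_prod_le _ _ _).trans ?_
    apply le_of_eq
    refine Finset.sum_eq_zero fun l hl => Nat.eq_zero_of_le_zero ?_
    refine (degreeOf_pow_le _ _ _).trans ?_
    have h1 : i ≠ j := fun h => hi (h ▸ hj)
    have h2 : i ≠ l := fun h => hi (h ▸ Finset.mem_of_mem_erase hl)
    have := degreeOf_sub_le i (X l : MvPolynomial σ ℚ) (X j)
    rw [degreeOf_X_of_ne h1, degreeOf_X_of_ne h2] at this
    simp at this
    simp [this]
  rw [← notMem_support_iff]
  exact notMem_support_of_degreeOf_lt i (by omega)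

theorem E_erase (s : Finset σ) (a : σ → ℕ) (i : σ) (hi : i ∈ s) (ha : a i = 0) :
    E s a = E (s.erase i) a + Finsupp.single i (∑ j ∈ s.erase i, a j) := by
  ext j
  by_cases h : j = i
  · subst h
    simp [E, hi]
  · by_cases hj : j ∈ s
    · simp only [E, Finsupp.coe_add, Pi.add_apply, Finsupp.equivFunOnFinite_symm_apply_apply, hj, if_true, Finset.mem_erase, h,
        ne_eq, not_false_eq_true, and_self, Finsupp.single_apply, Ne.symm h, if_false, add_zero]
      have : i ∈ s.erase j := Finset.mem_erase.2 ⟨Ne.symm h, hi⟩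
      rw [← Finset.add_sum_erase _ _ this, ha, zero_add, Finset.erase_right_comm]
    · simp [E, hj, Ne.symm h]

theorem E_update (s : Finset σ) (a : σ → ℕ) (i : σ) (hi : i ∈ s) (ha : a i ≠ 0) :
    E s a = ∑ j ∈ s.erase i, Finsupp.single j 1 + E s (Function.update a i (a i - 1)) := by
  ext j
  simp only [E, Finsupp.coe_add, Pi.add_apply, Finsupp.equivFunOnFinite_symm_apply_apply, Finsupp.finsetSum_apply,
    Finsupp.single_apply, Finset.sum_ite_eq']
  by_cases hj : j ∈ s
  · by_cases h : j = i
    · subst h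
      simp only [hi, if_true, Finset.mem_erase, ne_eq, not_true_eq_false, false_and, if_false, zero_add]
      refine Finset.sum_congr rfl fun l hl => ?_
      rw [Function.update_of_ne (Finset.ne_of_mem_erase hl)]
    · simp only [hj, if_true, Finset.mem_erase, h, ne_eq, not_false_eq_true, and_self]
      have : i ∈ s.erase j := Finset.mem_erase.2 ⟨Ne.symm h, hi⟩
      rw [← Finset.add_sum_erase _ _ this, ← Finset.add_sum_erase _ (Function.update a i (a i - 1)) this,
        Function.update_self]
      rw [Finset.sum_congr rfl (g := a) (s₁ := (s.erase j).erase i) (f := Function.update a i (a i - 1))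
        (fun l hl => Function.update_of_ne (Finset.ne_of_mem_erase hl) _ _)]
      change _ + ∑ x ∈ (s.erase j).erase i, a x = _ + (_ + ∑ x ∈ (s.erase j).erase i, a x)
      omega
  · simp [hj]

theorem dyson (N : ℕ) : ∀ (s : Finset σ) (a : σ → ℕ), s.card + ∑ i ∈ s, a i = N →
    coeff (E s a) (P s a) = ((∑ i ∈ s, a i).factorial : ℚ) / ∏ i ∈ s, ((a i).factorial : ℚ) := by
  induction N using Nat.strong_induction_on with
  | _ N ih =>
  intro s a hN
  rcases s.eq_empty_or_nonempty with rfl | hs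
  · have : E (∅ : Finset σ) a = 0 := by ext; simp [E]
    simp [this, P]
  by_cases h0 : ∃ i ∈ s, a i = 0
  · obtain ⟨i, hi, ha⟩ := h0
    rw [P_erase s a i hi ha, E_erase s a i hi ha]
    rw [(coeff_steps i a (s.erase i) (Finset.notMem_erase _ _) _ _ ?_).1]
    · have hc := Finset.card_erase_add_one hi
      have hsum : ∑ j ∈ s, a j = ∑ j ∈ s.erase i, a j := by
        rw [← Finset.add_sum_erase s a hi, ha, zero_add]
      rw [ih _ (by omega) (s.erase i) a rfl, hsum, ← Finset.mul_prod_erase s _ hi, ha]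
      simp
    · intro q hq
      exact P_deg _ _ i (Finset.notMem_erase _ _) q (by omega)
  · push Not at h0
    rw [P_rec s hs a h0, coeff_sum]
    obtain ⟨T, hT⟩ : ∃ T, ∑ i ∈ s, a i = T + 1 := by
      obtain ⟨i, hi⟩ := hs
      have h1 := Finset.single_le_sum (f := a) (fun _ _ => Nat.zero_le _) hi
      have h2 := h0 i hi
      exact ⟨∑ i ∈ s, a i - 1, by omega⟩
    have key : ∀ i ∈ s, coeff (E s a) ((∏ j ∈ s.erase i, X j) * P s (Function.update a i (a i - 1)))
        = (a i : ℚ) * ((T.factorial : ℚ) / ∏ i ∈ s, ((a i).factorial : ℚ)) := by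
      intro i hi
      have hai := h0 i hi
      have hX : (∏ j ∈ s.erase i, X j : MvPolynomial σ ℚ) = monomial (∑ j ∈ s.erase i, Finsupp.single j 1) 1 := by
        rw [monomial_sum_one]; rfl
      rw [E_update s a i hi hai, hX, coeff_monomial_mul, one_mul]
      have hs1 : ∑ j ∈ s, Function.update a i (a i - 1) j = T := by
        rw [← Finset.add_sum_erase _ _ hi, Function.update_self,
          Finset.sum_congr rfl (g := a) (fun l hl => Function.update_of_ne (Finset.ne_of_mem_erase hl) _ _)]
        have := Finset.add_sum_erase _ a hi
        change _ + ∑ x ∈ s.erase i, a x = _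
        omega
      rw [ih (s.card + T) (by omega) s _ (by rw [hs1]), hs1, ← Finset.mul_prod_erase _ _ hi,
        ← Finset.mul_prod_erase s (fun j => ((a j).factorial : ℚ)) hi, Function.update_self,
        Finset.prod_congr rfl (s₁ := s.erase i) (g := fun j => ((a j).factorial : ℚ))
          (fun l hl => by rw [Function.update_of_ne (Finset.ne_of_mem_erase hl)])]
      have hp : ∏ j ∈ s.erase i, ((a j).factorial : ℚ) ≠ 0 :=
        Finset.prod_ne_zero_iff.2 fun j _ => by exact_mod_cast (Nat.factorial_ne_zero _)
      obtain ⟨c, hc⟩ := Nat.exists_eq_succ_of_ne_zero hai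
      have hcf : (c.factorial : ℚ) ≠ 0 := by exact_mod_cast (Nat.factorial_ne_zero _)
      rw [hc, Nat.succ_sub_one, Nat.succ_eq_add_one, Nat.factorial_succ]
      push_cast
      have : (c : ℚ) + 1 ≠ 0 := by positivity
      field_simp
    rw [Finset.sum_congr rfl key, ← Finset.sum_mul, hT, Nat.factorial_succ]
    have : ∑ i ∈ s, (a i : ℚ) = T + 1 := by exact_mod_cast hT
    rw [this]
    push_cast
    ring

/-! Part 4: assembly. -/

theorem V_pow_eq_P (k : ℕ) : V σ ^ k = P univ (fun _ : σ => k) := by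
  unfold V P
  rw [← Finset.prod_pow]
  refine Finset.prod_finset_product_right _ _ _ ?_
  rintro ⟨p, q⟩
  simp

theorem V_pow_eq (k : ℕ) : V σ ^ k = ∏ j : σ, ∏ i ∈ univ.erase j, (X j - X i) ^ k := by
  unfold V
  rw [← Finset.prod_pow]
  refine Finset.prod_finset_product _ _ _ ?_
  rintro ⟨p, q⟩
  simp [eq_comm]

theorem V_hom (k : ℕ) : (V σ ^ k).IsHomogeneous
    (Fintype.card σ * ((Fintype.card σ - 1) * k)) := by
  have h1 : (V σ).IsHomogeneous (∑ p ∈ (univ : Finset σ).offDiag, 1) :=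
    IsHomogeneous.prod _ _ _ fun p _ => (isHomogeneous_X _ _).sub (isHomogeneous_X _ _)
  have h2 := h1.pow k
  have e : (∑ p ∈ (univ : Finset σ).offDiag, 1) * k = Fintype.card σ * ((Fintype.card σ - 1) * k) := by
    rw [← Finset.card_eq_sum_ones, Finset.offDiag_card, Finset.card_univ, ← mul_assoc, Nat.mul_sub, mul_one]
  rwa [e] at h2

theorem L_base (n k : ℕ) (hn : Fintype.card σ = n) :
    L σ ((n - 1) * k) (V σ ^ k) = ((n * k).factorial : ℚ) / (k.factorial : ℚ) ^ n := by
  have h := coeff_eq_L ((n - 1) * k) 0 _ (V σ ^ k) (V_hom k) (by rw [hn, add_zero])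
  rw [pow_zero, mul_one, Nat.factorial_zero, Nat.cast_one, one_mul] at h
  rw [← h, V_pow_eq_P]
  have hE : Finsupp.equivFunOnFinite.symm (fun _ : σ => (n - 1) * k) = E univ (fun _ : σ => k) := by
    ext j
    simp [E, Finset.card_erase_of_mem, hn]
  rw [hE, dyson _ univ _ rfl]
  simp [hn]

theorem L_eval (n b k : ℕ) (hn : Fintype.card σ = n) (hn1 : 1 ≤ n) :
    L σ ((n - 1) * k + b) (V σ ^ k)
      = ∏ l ∈ range n, ((k * (l + 1)).factorial : ℚ) / ((b + k * l).factorial * k.factorial) := by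
  induction b with
  | zero =>
    rw [add_zero, L_base n k hn]
    clear hn hn1
    induction n with
    | zero => simp
    | succ n ih =>
      rw [Finset.prod_range_succ, ← ih, zero_add, mul_comm k n, mul_comm k (n + 1)]
      have h1 : ((n * k).factorial : ℚ) ≠ 0 := by exact_mod_cast Nat.factorial_ne_zero _
      have h2 : (k.factorial : ℚ) ≠ 0 := by exact_mod_cast Nat.factorial_ne_zero _
      rw [pow_succ]
      field_simp
  | succ b ih =>
    have h := aomoto_all n (b + 1) k hn hn1 (univ : Finset σ)
    rw [← add_assoc, L_prod_X_mul, ih, Finset.card_univ, hn] at h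
    have hp : ∏ l ∈ range n, (((b + 1 : ℕ) : ℚ) + k * l) ≠ 0 :=
      Finset.prod_ne_zero_iff.2 fun l _ => by positivity
    rw [← add_assoc]
    apply mul_left_cancel₀ hp
    rw [← h, ← Finset.prod_mul_distrib]
    refine Finset.prod_congr rfl fun l _ => ?_
    rw [show b + 1 + k * l = (b + k * l) + 1 by ring, Nat.factorial_succ]
    have h1 : ((b + k * l).factorial : ℚ) ≠ 0 := by exact_mod_cast Nat.factorial_ne_zero _
    have h2 : (k.factorial : ℚ) ≠ 0 := by exact_mod_cast Nat.factorial_ne_zero _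
    have h3 : (b : ℚ) + k * l + 1 ≠ 0 := by positivity
    push_cast
    field_simp
    ring

end Morris

/-- **Second leading coefficient identity for the Morris constant term** (Corollary 6.4,
second identity).  For `n ≥ 2` and `nb ≥ 2`,
`CT_x x_1^2 (x_1+⋯+x_n)^(nb-2) ∏_l x_l^(-b) ∏_{1≤i≠j≤n}(1-x_i/x_j)^k
  = -b(nk-k-b+1)(nb-2)! ∏_{l=0}^{n-1} (k(l+1))!/((b+kl)! k!)`.
Clearing denominators, the constant term equals the coefficient of
`∏_l x_l^((n-1)k + b)` in `x_1^2 (x_1+⋯+x_n)^(nb-2) · ∏_{i≠j}(x_j-x_i)^k`. -/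
theorem morris_second_leading_coefficient (n b k : ℕ) (hn : 2 ≤ n) (hnb : 2 ≤ n * b) :
    MvPolynomial.coeff
      (Finsupp.equivFunOnFinite.symm (fun _ : Fin n => (n - 1) * k + b))
      ((X (⟨0, by omega⟩ : Fin n)) ^ 2 * (∑ l : Fin n, X l) ^ (n * b - 2) *
        ∏ j : Fin n, ∏ i ∈ Finset.univ.erase j,
          (X j - X i : MvPolynomial (Fin n) ℚ) ^ k)
      = -(b : ℚ) * ((n : ℚ) * k - k - b + 1) * ((n * b - 2).factorial : ℚ) *
          ∏ l ∈ Finset.range n,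
            ((k * (l + 1)).factorial : ℚ) / ((b + k * l).factorial * k.factorial) := by
  have h1 : 1 ≤ n := by omega
  have hc : Fintype.card (Fin n) = n := Fintype.card_fin n
  rw [← Morris.V_pow_eq, mul_right_comm,
    Morris.coeff_eq_L ((n - 1) * k + b) (n * b - 2) _ _
      (((isHomogeneous_X ℚ (⟨0, by omega⟩ : Fin n)).pow 2).mul (Morris.V_hom k))
      (by rw [hc, mul_add]; omega),
    Morris.aomoto_sq]
  have h2 := Morris.aomoto_all (σ := Fin n) n b k hc h1 {⟨0, by omega⟩}
  rw [Finset.prod_singleton, Finset.card_singleton, Finset.prod_range_one,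
    Morris.L_eval n b k hc h1] at h2
  rw [h2, hc]
  push_cast [Nat.cast_sub h1]
  ring
end
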